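/- There is an absolute constant C with the following property. Let (u,P,d) be a smooth solution of the nematic liquid crystal system on ℝ³×(0,T) satisfying the Schwartz decay assumption, and write ω = ∇×u. Then for every t ∈ (0,T), (d/dt)( ‖∇Δu(t,·)‖_{L²}² + ‖Δ²d(t,·)‖_{L²}² ) + ¼( ‖Δ²u(t,·)‖_{L²}² + ‖∇Δ²d(t,·)‖_{L²}² ) ≤ C( ‖ω‖_{L²}^{13/2} ‖∇Δu‖_{L²}^{3/2} + ‖Δd‖_{L²}^{14} + ‖Δd‖_{L²}^{38/7} + ‖Δd‖_{L²}^{14/5} + ‖∇ω‖_{L²}^{14} ), where all norms on the right are taken at time t. -/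

import Mathlib

open MeasureTheory Real

noncomputable section

/-- `pd i f x` is the `i`-th partial derivative `∂ᵢ f (x)` of `f : ℝⁿ → ℝ`. -/
def pd {n : ℕ} (i : Fin n) (f : EuclideanSpace ℝ (Fin n) → ℝ)
    (x : EuclideanSpace ℝ (Fin n)) : ℝ :=
  fderiv ℝ f x (EuclideanSpace.single i 1)

/-- `lap f x` is the Laplacian `Δf(x) = Σᵢ ∂ᵢ∂ᵢ f (x)`. -/
def lap {n : ℕ} (f : EuclideanSpace ℝ (Fin n) → ℝ)
    (x : EuclideanSpace ℝ (Fin n)) : ℝ :=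
  ∑ i, pd i (fun y => pd i f y) x

/-- The curl of a vector field on ℝ³, given by its component functions. -/
def curl3 (w : Fin 3 → EuclideanSpace ℝ (Fin 3) → ℝ) :
    Fin 3 → EuclideanSpace ℝ (Fin 3) → ℝ :=
  ![fun x => pd 1 (w 2) x - pd 2 (w 1) x,
    fun x => pd 2 (w 0) x - pd 0 (w 2) x,
    fun x => pd 0 (w 1) x - pd 1 (w 0) x]
/-- The simplified Ericksen–Leslie nematic liquid crystal system on ℝⁿ × (0,T). -/
structure IsNLC (n : ℕ) (T : ℝ)
    (u : ℝ → EuclideanSpace ℝ (Fin n) → EuclideanSpace ℝ (Fin n))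
    (P : ℝ → EuclideanSpace ℝ (Fin n) → ℝ)
    (d : ℝ → EuclideanSpace ℝ (Fin n) → EuclideanSpace ℝ (Fin 3)) : Prop where
  smooth_u : ContDiff ℝ (⊤ : ℕ∞) (Function.uncurry u)
  smooth_P : ContDiff ℝ (⊤ : ℕ∞) (Function.uncurry P)
  smooth_d : ContDiff ℝ (⊤ : ℕ∞) (Function.uncurry d)
  unit : ∀ t ∈ Set.Ioo (0:ℝ) T, ∀ x, ‖d t x‖ = 1
  momentum : ∀ t ∈ Set.Ioo (0:ℝ) T, ∀ x, ∀ j : Fin n,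
    deriv (fun s => u s x j) t - lap (fun y => u t y j) x
      + (∑ i, u t x i * pd i (fun y => u t y j) x) + pd j (P t) x
      = - ∑ i, pd i (fun y => ∑ k : Fin 3,
          pd i (fun z => d t z k) y * pd j (fun z => d t z k) y) x
  director : ∀ t ∈ Set.Ioo (0:ℝ) T, ∀ x, ∀ k : Fin 3,
    deriv (fun s => d s x k) t + ∑ i, u t x i * pd i (fun y => d t y k) x
      = lap (fun y => d t y k) x
        + (∑ i, ∑ k' : Fin 3, (pd i (fun y => d t y k') x) ^ 2) * d t x k
  divfree : ∀ t ∈ Set.Ioo (0:ℝ) T, ∀ x, ∑ i, pd i (fun y => u t y i) x = 0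

/-- A family of functions, Schwartz in x with seminorms locally uniformly bounded in t ∈ (0,T). -/
def SchwartzFamily {n : ℕ} (T : ℝ) (f : ℝ → EuclideanSpace ℝ (Fin n) → ℝ) : Prop :=
  ∀ t₀ ∈ Set.Ioo (0:ℝ) T, ∀ k l : ℕ, ∃ ε > 0, ∃ C : ℝ,
    ∀ t ∈ Set.Ioo (0:ℝ) T, |t - t₀| < ε →
      ∀ x, ‖x‖ ^ k * ‖iteratedFDeriv ℝ l (f t) x‖ ≤ C

/-- Schwartz decay assumption: u, ∂ₜu, ∇d, ∂ₜ∇d are Schwartz in x, locally uniformly in t. -/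
def SchwartzDecay (n : ℕ) (T : ℝ)
    (u : ℝ → EuclideanSpace ℝ (Fin n) → EuclideanSpace ℝ (Fin n))
    (d : ℝ → EuclideanSpace ℝ (Fin n) → EuclideanSpace ℝ (Fin 3)) : Prop :=
  (∀ j : Fin n, SchwartzFamily T fun t x => u t x j) ∧
  (∀ j : Fin n, SchwartzFamily T fun t x => deriv (fun s => u s x j) t) ∧
  (∀ (i : Fin n) (k : Fin 3), SchwartzFamily T fun t x => pd i (fun y => d t y k) x) ∧
  (∀ (i : Fin n) (k : Fin 3),
    SchwartzFamily T fun t x => deriv (fun s => pd i (fun y => d s y k) x) t)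

/-- ‖Δd‖_{L²} for d : ℝⁿ → ℝ³. -/
def lapL2 {n : ℕ} (d : EuclideanSpace ℝ (Fin n) → EuclideanSpace ℝ (Fin 3)) : ℝ :=
  Real.sqrt (∑ k : Fin 3, ∫ x, (lap (fun z => d z k) x) ^ 2)

/-- ‖∇Δd‖_{L²} for d : ℝⁿ → ℝ³. -/
def gradLapL2 {n : ℕ} (d : EuclideanSpace ℝ (Fin n) → EuclideanSpace ℝ (Fin 3)) : ℝ :=
  Real.sqrt (∑ i, ∑ k : Fin 3, ∫ x, (pd i (lap (fun z => d z k)) x) ^ 2)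

/-- ‖Δ²d‖_{L²} for d : ℝⁿ → ℝ³. -/
def bilapL2 {n : ℕ} (d : EuclideanSpace ℝ (Fin n) → EuclideanSpace ℝ (Fin 3)) : ℝ :=
  Real.sqrt (∑ k : Fin 3, ∫ x, (lap (lap (fun z => d z k)) x) ^ 2)

/-- ‖∇Δ²d‖_{L²} for d : ℝⁿ → ℝ³. -/
def gradBilapL2 {n : ℕ} (d : EuclideanSpace ℝ (Fin n) → EuclideanSpace ℝ (Fin 3)) : ℝ :=
  Real.sqrt (∑ i, ∑ k : Fin 3, ∫ x, (pd i (lap (lap (fun z => d z k))) x) ^ 2)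

/-- ‖∇Δu‖_{L²} for a vector field u : ℝⁿ → ℝⁿ. -/
def gradLapL2u {n : ℕ} (u : EuclideanSpace ℝ (Fin n) → EuclideanSpace ℝ (Fin n)) : ℝ :=
  Real.sqrt (∑ i, ∑ j, ∫ x, (pd i (lap (fun y => u y j)) x) ^ 2)

/-- ‖Δ²u‖_{L²} for a vector field u : ℝⁿ → ℝⁿ. -/
def bilapL2u {n : ℕ} (u : EuclideanSpace ℝ (Fin n) → EuclideanSpace ℝ (Fin n)) : ℝ :=
  Real.sqrt (∑ j, ∫ x, (lap (lap (fun y => u y j)) x) ^ 2)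

/-- ‖ω‖_{L²}: the L² norm of the vorticity ω = ∇×u on ℝ³. -/
def vortL2 (u : EuclideanSpace ℝ (Fin 3) → EuclideanSpace ℝ (Fin 3)) : ℝ :=
  Real.sqrt (∑ j, ∫ x, (curl3 (fun k y => u y k) j x) ^ 2)

/-- ‖∇ω‖_{L²}: the L² norm of the gradient of the vorticity on ℝ³. -/
def gradVortL2 (u : EuclideanSpace ℝ (Fin 3) → EuclideanSpace ℝ (Fin 3)) : ℝ :=
  Real.sqrt (∑ i, ∑ j, ∫ x, (pd i (curl3 (fun k y => u y k) j) x) ^ 2)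



/-- three-dimensional Euclidean space -/
abbrev E3 := EuclideanSpace ℝ (Fin 3)

/-- `f` is (the function underlying) a Schwartz function. -/
def Sch (f : E3 → ℝ) : Prop := ∃ g : SchwartzMap E3 ℝ, ⇑g = f

/-- Smooth functions -/
def Sm (f : E3 → ℝ) : Prop := ContDiff ℝ (⊤ : ℕ∞) f

lemma Sch.sm {f : E3 → ℝ} (hf : Sch f) : Sm f := by
  obtain ⟨g, rfl⟩ := hf
  exact g.smooth ⊤

lemma Sm.diff {f : E3 → ℝ} (hf : Sm f) : Differentiable ℝ f :=
  ContDiff.differentiable hf (by simp)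

lemma Sm.pd {f : E3 → ℝ} (hf : Sm f) (i : Fin 3) : Sm (pd i f) := by
  have h : ContDiff ℝ (⊤ : ℕ∞) (fderiv ℝ f) := ContDiff.fderiv_right hf (by simp)
  exact h.clm_apply contDiff_const

lemma Sm.add {f g : E3 → ℝ} (hf : Sm f) (hg : Sm g) : Sm (f + g) := ContDiff.add hf hg
lemma Sm.sub {f g : E3 → ℝ} (hf : Sm f) (hg : Sm g) : Sm (f - g) := ContDiff.sub hf hg
lemma Sm.neg {f : E3 → ℝ} (hf : Sm f) : Sm (-f) := ContDiff.neg hf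
lemma Sm.mul {f g : E3 → ℝ} (hf : Sm f) (hg : Sm g) : Sm (f * g) := ContDiff.mul hf hg
lemma Sm.sum {ι : Type*} {s : Finset ι} {f : ι → E3 → ℝ} (hf : ∀ i, Sm (f i)) :
    Sm (∑ i ∈ s, f i) := by
  have : (∑ i ∈ s, f i) = fun x => ∑ i ∈ s, f i x := by ext x; simp
  rw [this]
  exact ContDiff.sum fun i _ => hf i

lemma pd_add {f g : E3 → ℝ} (hf : Sm f) (hg : Sm g) (i : Fin 3) :
    pd i (f + g) = pd i f + pd i g := by
  ext x
  simp [pd, fderiv_add (hf.diff x) (hg.diff x)]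

lemma pd_sub {f g : E3 → ℝ} (hf : Sm f) (hg : Sm g) (i : Fin 3) :
    pd i (f - g) = pd i f - pd i g := by
  ext x
  simp [pd, fderiv_sub (hf.diff x) (hg.diff x)]

lemma pd_neg (f : E3 → ℝ) (i : Fin 3) :
    pd i (-f) = - pd i f := by
  ext x
  simp [pd, fderiv_neg]

lemma pd_mul {f g : E3 → ℝ} (hf : Sm f) (hg : Sm g) (i : Fin 3) :
    pd i (f * g) = pd i f * g + f * pd i g := by
  ext x
  simp [pd, fderiv_mul (hf.diff x) (hg.diff x)]
  ring

lemma pd_sum {ι : Type*} {s : Finset ι} {f : ι → E3 → ℝ} (hf : ∀ i, Sm (f i)) (j : Fin 3) :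
    pd j (∑ i ∈ s, f i) = ∑ i ∈ s, pd j (f i) := by
  ext x
  simp [pd, fderiv_sum (fun i _ => (hf i).diff x)]

lemma pd_comm {f : E3 → ℝ} (hf : Sm f) (i j : Fin 3) : pd i (pd j f) = pd j (pd i f) := by
  have key : ∀ (i j : Fin 3) x, pd i (pd j f) x =
      fderiv ℝ (fderiv ℝ f) x (EuclideanSpace.single i 1) (EuclideanSpace.single j 1) := by
    intro i j x
    have h : DifferentiableAt ℝ (fderiv ℝ f) x :=
      (ContDiff.differentiable (n := (⊤ : ℕ∞)) (ContDiff.fderiv_right hf (by simp)) (by simp)) x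
    unfold pd
    rw [fderiv_clm_apply h (by fun_prop)]
    simp
  ext x
  rw [key, key]
  have hs : IsSymmSndFDerivAt ℝ f x := (ContDiff.contDiffAt hf).isSymmSndFDerivAt (by
    simp only [minSmoothness_of_isRCLikeNormedField]; exact ENat.LEInfty.out)
  exact hs _ _

lemma lap_eq (f : E3 → ℝ) : lap f = ∑ i, pd i (pd i f) := by
  ext x
  simp [lap]

lemma Sm.lap {f : E3 → ℝ} (hf : Sm f) : Sm (lap f) := by
  rw [lap_eq]
  exact Sm.sum fun i => (hf.pd i).pd i

lemma lap_add {f g : E3 → ℝ} (hf : Sm f) (hg : Sm g) : lap (f + g) = lap f + lap g := by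
  simp only [lap_eq, pd_add hf hg, pd_add (hf.pd _) (hg.pd _), Finset.sum_add_distrib]

lemma lap_sub {f g : E3 → ℝ} (hf : Sm f) (hg : Sm g) : lap (f - g) = lap f - lap g := by
  simp only [lap_eq, pd_sub hf hg, pd_sub (hf.pd _) (hg.pd _), Finset.sum_sub_distrib]

lemma lap_sum {ι : Type*} {s : Finset ι} {f : ι → E3 → ℝ} (hf : ∀ i, Sm (f i)) :
    lap (∑ i ∈ s, f i) = ∑ i ∈ s, lap (f i) := by
  simp only [lap_eq, pd_sum hf, pd_sum (fun i => (hf i).pd _)]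
  exact Finset.sum_comm

lemma lap_mul {f g : E3 → ℝ} (hf : Sm f) (hg : Sm g) :
    lap (f * g) = lap f * g + 2 * ∑ i, pd i f * pd i g + f * lap g := by
  simp only [lap_eq, pd_mul hf hg, pd_add ((hf.pd _).mul hg) (hf.mul (hg.pd _)),
    pd_mul (hf.pd _) hg, pd_mul hf (hg.pd _), Finset.sum_mul, Finset.mul_sum,
    ← Finset.sum_add_distrib]
  exact Finset.sum_congr rfl fun i _ => by ring

lemma lap_pd {f : E3 → ℝ} (hf : Sm f) (j : Fin 3) : lap (pd j f) = pd j (lap f) := by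
  simp only [lap_eq, pd_sum (fun i => (hf.pd i).pd i)]
  exact Finset.sum_congr rfl fun i _ => by
    rw [pd_comm hf i j, pd_comm (hf.pd i) i j]

lemma Sch.add {f g : E3 → ℝ} (hf : Sch f) (hg : Sch g) : Sch (f + g) := by
  obtain ⟨f, rfl⟩ := hf; obtain ⟨g, rfl⟩ := hg
  exact ⟨f + g, by ext x; simp⟩
lemma Sch.sub {f g : E3 → ℝ} (hf : Sch f) (hg : Sch g) : Sch (f - g) := by
  obtain ⟨f, rfl⟩ := hf; obtain ⟨g, rfl⟩ := hg
  exact ⟨f - g, by ext x; simp⟩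
lemma Sch.neg {f : E3 → ℝ} (hf : Sch f) : Sch (-f) := by
  obtain ⟨f, rfl⟩ := hf
  exact ⟨-f, by ext x; simp⟩
lemma Sch.zero : Sch 0 := ⟨0, by ext x; simp⟩
lemma Sch.tmul {f g : E3 → ℝ} (hf : f.HasTemperateGrowth) (hg : Sch g) : Sch (f * g) := by
  obtain ⟨g, rfl⟩ := hg
  exact ⟨SchwartzMap.smulLeftCLM ℝ f g, by
    ext x; rw [SchwartzMap.smulLeftCLM_apply_apply hf]; simp⟩
lemma Sch.mul {f g : E3 → ℝ} (hf : Sch f) (hg : Sch g) : Sch (f * g) := by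
  obtain ⟨f, rfl⟩ := hf
  exact Sch.tmul f.hasTemperateGrowth hg
lemma Sch.sum {ι : Type*} {s : Finset ι} {f : ι → E3 → ℝ} (hf : ∀ i, Sch (f i)) :
    Sch (∑ i ∈ s, f i) := by
  classical
  induction s using Finset.induction_on with
  | empty => simpa using Sch.zero
  | insert a s ha ih => rw [Finset.sum_insert ha]; exact (hf a).add ih
lemma Sch.pd {f : E3 → ℝ} (hf : Sch f) (i : Fin 3) : Sch (pd i f) := by
  obtain ⟨f, rfl⟩ := hf
  open LineDeriv in
  exact ⟨∂_{(EuclideanSpace.single i 1 : E3)} f, by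
    ext x; rw [SchwartzMap.lineDerivOp_apply_eq_fderiv]; rfl⟩
lemma Sch.lap {f : E3 → ℝ} (hf : Sch f) : Sch (lap f) := by
  rw [lap_eq]
  exact Sch.sum fun i => (hf.pd i).pd i
lemma Sch.two_mul {f : E3 → ℝ} (hf : Sch f) : Sch (2 * f) := by
  rw [_root_.two_mul]; exact hf.add hf
lemma Sm.two_mul {f : E3 → ℝ} (hf : Sm f) : Sm (2 * f) := by
  rw [_root_.two_mul]; exact hf.add hf

lemma Sch.integrable {f : E3 → ℝ} (hf : Sch f) : Integrable f := by
  obtain ⟨f, rfl⟩ := hf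
  exact f.integrable
lemma Sch.memLp {f : E3 → ℝ} (hf : Sch f) (p : ENNReal) : MemLp f p := by
  obtain ⟨f, rfl⟩ := hf
  exact f.memLp p

/-- integral of a function -/
def I (f : E3 → ℝ) : ℝ := ∫ x, f x

lemma I_add {f g : E3 → ℝ} (hf : Sch f) (hg : Sch g) : I (f + g) = I f + I g :=
  integral_add hf.integrable hg.integrable
lemma I_sub {f g : E3 → ℝ} (hf : Sch f) (hg : Sch g) : I (f - g) = I f - I g :=
  integral_sub hf.integrable hg.integrable
lemma I_neg (f : E3 → ℝ) : I (-f) = - I f := integral_neg f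
lemma I_two (f : E3 → ℝ) : I (2 * f) = 2 * I f := integral_const_mul 2 f
lemma I_sum {ι : Type*} {s : Finset ι} {f : ι → E3 → ℝ} (hf : ∀ i, Sch (f i)) :
    I (∑ i ∈ s, f i) = ∑ i ∈ s, I (f i) := by
  unfold I
  simp only [Finset.sum_apply]
  exact integral_finsetSum _ fun i _ => (hf i).integrable

/-- integration by parts -/
lemma ibp {f g : E3 → ℝ} (hf : Sch f) (hg : Sch g) (i : Fin 3) :
    I (f * pd i g) = - I (pd i f * g) := by
  obtain ⟨f, rfl⟩ := hf; obtain ⟨g, rfl⟩ := hg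
  exact SchwartzMap.integral_mul_lineDerivOp_right_eq_neg_left f g (EuclideanSpace.single i 1)

/-- L² norm -/
def n2 (f : E3 → ℝ) : ℝ := Real.sqrt (I (f * f))

lemma I_sq_nonneg (f : E3 → ℝ) : 0 ≤ I (f * f) :=
  integral_nonneg fun _ => mul_self_nonneg _
lemma n2_nonneg (f : E3 → ℝ) : 0 ≤ n2 f := Real.sqrt_nonneg _
lemma n2_sq (f : E3 → ℝ) : n2 f ^ 2 = I (f * f) := Real.sq_sqrt (I_sq_nonneg f)

lemma I_mul_le {f g : E3 → ℝ} (hf : Sch f) (hg : Sch g) : |I (f * g)| ≤ n2 f * n2 g := by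
  have h : I (f * g) ^ 2 ≤ I (f * f) * I (g * g) := by
    have hq : ∀ t : ℝ, 0 ≤ I (g * g) * (t * t) + (2 * I (f * g)) * t + I (f * f) := by
      intro t
      have h0 : 0 ≤ ∫ x, (f x + t * g x) ^ 2 := integral_nonneg fun _ => sq_nonneg _
      have h1 : ∫ x, (f x + t * g x) ^ 2 = ∫ x, ((t * t) * ((g * g) x) + ((2 * t) * ((f * g) x)
          + (f * f) x)) := by
        congr 1; ext x; simp; ring
      have hI : Integrable (fun x => (2 * t) * ((f * g) x) + (f * f) x) :=
        ((hf.mul hg).integrable.const_mul _).add (hf.mul hf).integrable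
      rw [h1, integral_add ((hg.mul hg).integrable.const_mul _)
        hI,
        integral_add ((hf.mul hg).integrable.const_mul _) (hf.mul hf).integrable,
        integral_const_mul, integral_const_mul] at h0
      unfold I; linarith
    have := discrim_le_zero hq
    unfold discrim at this
    nlinarith
  rw [n2, n2, ← Real.sqrt_mul (I_sq_nonneg f)]
  exact Real.abs_le_sqrt h

lemma n2_add {f g : E3 → ℝ} (hf : Sch f) (hg : Sch g) : n2 (f + g) ≤ n2 f + n2 g := by
  have h1 : I ((f + g) * (f + g)) = I (f * f) + 2 * I (f * g) + I (g * g) := by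
    have : (f + g) * (f + g) = f * f + 2 * (f * g) + g * g := by ring
    rw [this, I_add ((hf.mul hf).add (hf.mul hg).two_mul) (hg.mul hg),
      I_add (hf.mul hf) (hf.mul hg).two_mul, I_two]
  refine (sq_le_sq₀ (n2_nonneg _) (add_nonneg (n2_nonneg _) (n2_nonneg _))).1 ?_
  rw [n2_sq, h1, add_sq, n2_sq, n2_sq]
  have := (abs_le.1 (I_mul_le hf hg)).2
  linarith

lemma n2_neg (f : E3 → ℝ) : n2 (-f) = n2 f := by simp [n2]
lemma n2_zero : n2 0 = 0 := by simp [n2, I]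
lemma n2_sub {f g : E3 → ℝ} (hf : Sch f) (hg : Sch g) : n2 (f - g) ≤ n2 f + n2 g := by
  rw [sub_eq_add_neg, ← n2_neg g]; exact n2_add hf hg.neg
lemma n2_two {f : E3 → ℝ} (hf : Sch f) : n2 (2 * f) ≤ 2 * n2 f := by
  rw [two_mul, two_mul]; exact n2_add hf hf
lemma n2_sum {ι : Type*} {s : Finset ι} {f : ι → E3 → ℝ} (hf : ∀ i, Sch (f i)) :
    n2 (∑ i ∈ s, f i) ≤ ∑ i ∈ s, n2 (f i) := by
  classical
  induction s using Finset.induction_on with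
  | empty => simp [n2_zero]
  | insert a s ha ih =>
    rw [Finset.sum_insert ha, Finset.sum_insert ha]
    exact (n2_add (hf a) (Sch.sum hf)).trans (by gcongr)
lemma n2_sum3 {f : Fin 3 → E3 → ℝ} (hf : ∀ i, Sch (f i)) {M : ℝ} (h : ∀ i, n2 (f i) ≤ M) :
    n2 (∑ i, f i) ≤ 3 * M := by
  refine (n2_sum hf).trans ((Finset.sum_le_sum fun i _ => h i).trans ?_)
  simp

lemma eLpNorm_two_eq {f : E3 → ℝ} (hf : Sch f) : eLpNorm f 2 volume = ENNReal.ofReal (n2 f) := by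
  have h := (hf.memLp 2).eLpNorm_eq_integral_rpow_norm (by norm_num) (by norm_num)
  rw [h, n2, Real.sqrt_eq_rpow]
  congr 1
  simp only [ENNReal.toReal_ofNat, I]
  norm_num
  congr 1
  congr 1
  ext x
  simp [sq]

lemma norm_fderiv_le_sum (f : E3 → ℝ) (x : E3) : ‖fderiv ℝ f x‖ ≤ ∑ i, ‖pd i f x‖ := by
  refine ContinuousLinearMap.opNorm_le_bound _ (Finset.sum_nonneg fun _ _ => norm_nonneg _) ?_
  intro v
  have hv : v = ∑ i, v i • (EuclideanSpace.single i 1 : E3) := by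
    ext j
    simp [Fin.sum_univ_three]
    fin_cases j <;> simp
  conv_lhs => rw [hv]
  rw [map_sum, Finset.sum_mul]
  refine (norm_sum_le _ _).trans (Finset.sum_le_sum fun i _ => ?_)
  rw [map_smul, norm_smul, mul_comm]
  exact mul_le_mul_of_nonneg_left (PiLp.norm_apply_le v i) (norm_nonneg _)

/-- the cutoff function at scale `n + 1` -/
def cut (χ : ContDiffBump (0 : E3)) (n : ℕ) (x : E3) : ℝ := χ (((n : ℝ) + 1)⁻¹ • x)

lemma cut_contDiff (χ : ContDiffBump (0 : E3)) (n : ℕ) : ContDiff ℝ 1 (cut χ n) :=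
  χ.contDiff.comp (contDiff_const_smul _)

lemma cut_compact (χ : ContDiffBump (0 : E3)) (n : ℕ) : HasCompactSupport (cut χ n) := by
  have h : (((n : ℝ) + 1)⁻¹) ≠ 0 := by positivity
  exact χ.hasCompactSupport.comp_homeomorph (Homeomorph.smulOfNeZero _ h)

lemma cut_fderiv (χ : ContDiffBump (0 : E3)) : ∃ M : ℝ, 0 ≤ M ∧ ∀ n x,
    ‖fderiv ℝ (cut χ n) x‖ ≤ M * ((n : ℝ) + 1)⁻¹ := by
  have hc : Continuous (fderiv ℝ χ) := (χ.contDiff (n := 1)).continuous_fderiv (by simp)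
  obtain ⟨M, hM⟩ := (χ.hasCompactSupport.fderiv (𝕜 := ℝ)).exists_bound_of_continuous hc
  refine ⟨M, (norm_nonneg _).trans (hM 0), fun n x => ?_⟩
  have : cut χ n = fun x => χ (((n : ℝ) + 1)⁻¹ • x) := rfl
  rw [this, fderiv_comp_smul, norm_smul, mul_comm]
  have h : 0 ≤ (((n : ℝ) + 1)⁻¹) := by positivity
  rw [Real.norm_of_nonneg h]
  exact mul_le_mul_of_nonneg_right (hM _) h

lemma cut_tendsto (χ : ContDiffBump (0 : E3)) (x : E3) :
    Filter.Tendsto (fun n => cut χ n x) Filter.atTop (nhds 1) := by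
  have h1 : Filter.Tendsto (fun n : ℕ => (((n : ℝ) + 1)⁻¹) • x) Filter.atTop (nhds ((0 : ℝ) • x)) := by
    refine Filter.Tendsto.smul_const ?_ x
    simpa using tendsto_one_div_add_atTop_nhds_zero_nat (𝕜 := ℝ)
  rw [zero_smul] at h1
  have h2 := (χ.continuous.tendsto 0).comp h1
  have h3 : χ 0 = 1 := χ.one_of_mem_closedBall (by simpa using χ.rIn_pos.le)
  rw [h3] at h2
  exact h2

open ENNReal in
lemma sob_e : ∃ K : NNReal, ∀ f, Sch f →
    eLpNorm f 6 volume ≤ K * ∑ i, eLpNorm (pd i f) 2 volume := by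
  let χ : ContDiffBump (0 : E3) := ⟨1, 2, by norm_num, by norm_num⟩
  obtain ⟨M, hM0, hM⟩ := cut_fderiv χ
  set K : NNReal := SNormLESNormFDerivOfEqConst ℝ (volume : Measure E3) ((2 : NNReal) : ℝ) with hK
  refine ⟨K, fun f hf => ?_⟩
  set S : ℝ≥0∞ := ∑ i, eLpNorm (pd i f) 2 volume
  have hfc : ContDiff ℝ 1 f := ContDiff.of_le hf.sm (by exact_mod_cast le_top)
  have step : ∀ n : ℕ, eLpNorm (f * cut χ n) 6 volume ≤
      K * (S + ENNReal.ofReal (M * ((n : ℝ) + 1)⁻¹) * eLpNorm f 2 volume) := by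
    intro n
    have h1 := eLpNorm_le_eLpNorm_fderiv_of_eq (μ := (volume : Measure E3)) (u := f * cut χ n)
      (p := 2) (p' := 6) (hfc.mul (cut_contDiff χ n)) ((cut_compact χ n).mul_left)
      (by norm_num) (by simp) (by simp; norm_num)
    refine h1.trans ?_
    rw [← hK]
    gcongr
    have hb : ∀ x, ‖fderiv ℝ (f * cut χ n) x‖ ≤
        ‖(∑ i, fun x => ‖pd i f x‖) x + (M * ((n : ℝ) + 1)⁻¹) * ‖f x‖‖ := by
      intro x
      rw [fderiv_mul (hfc.differentiable (by simp) x)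
        ((cut_contDiff χ n).differentiable (by simp) x)]
      rw [Real.norm_of_nonneg (r := (∑ i, fun x => ‖pd i f x‖) x + (M * ((n : ℝ) + 1)⁻¹) * ‖f x‖) (by
        simp only [Finset.sum_apply]; positivity)]
      refine (norm_add_le _ _).trans ?_
      rw [norm_smul, norm_smul, add_comm]
      have hc1 : ‖cut χ n x‖ ≤ 1 := by
        unfold cut; rw [Real.norm_of_nonneg χ.nonneg]; exact χ.le_one
      have := norm_fderiv_le_sum f x
      have h2 := hM n x
      simp only [Finset.sum_apply]
      have h3 : ‖cut χ n x‖ * ‖fderiv ℝ f x‖ ≤ ∑ i, ‖pd i f x‖ :=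
        (mul_le_of_le_one_left (norm_nonneg _) hc1).trans this
      have h4 : ‖f x‖ * ‖fderiv ℝ (cut χ n) x‖ ≤ (M * ((n : ℝ) + 1)⁻¹) * ‖f x‖ := by
        rw [mul_comm]; gcongr
      linarith
    have hm : ∀ i ∈ (Finset.univ : Finset (Fin 3)),
        AEStronglyMeasurable (fun x => ‖pd i f x‖) (volume : Measure E3) :=
      fun i _ => ((hf.pd i).memLp 2).aestronglyMeasurable.norm
    have hc0 : 0 ≤ M * ((n : ℝ) + 1)⁻¹ := by positivity
    calc eLpNorm (fderiv ℝ (f * cut χ n)) 2 volume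
        ≤ eLpNorm ((∑ i, fun x => ‖pd i f x‖) + (M * ((n : ℝ) + 1)⁻¹) • fun x => ‖f x‖) 2 volume :=
          eLpNorm_mono hb
      _ ≤ eLpNorm (∑ i, fun x => ‖pd i f x‖) 2 volume
          + eLpNorm ((M * ((n : ℝ) + 1)⁻¹) • fun x => ‖f x‖) 2 volume := by
          refine eLpNorm_add_le ?_ ?_ (by norm_num)
          · exact Finset.aestronglyMeasurable_sum _ hm
          · exact ((hf.memLp 2).aestronglyMeasurable.norm).const_smul _
      _ ≤ S + _ := by
          gcongr
          · refine (eLpNorm_sum_le hm (by norm_num)).trans ?_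
            simp only [eLpNorm_norm]; rfl
          · rw [eLpNorm_const_smul, eLpNorm_norm, Real.enorm_of_nonneg hc0]
  have hlim := Lp.eLpNorm_lim_le_liminf_eLpNorm (p := 6) (μ := (volume : Measure E3))
    (f := fun n => f * cut χ n)
    (fun n => (hfc.continuous.mul (cut_contDiff χ n).continuous).aestronglyMeasurable) f
    (Filter.Eventually.of_forall fun x => by
      simpa using (cut_tendsto χ x).const_mul (f x))
  refine hlim.trans ((Filter.liminf_le_liminf (Filter.Eventually.of_forall step)).trans ?_)
  refine le_of_eq (Filter.Tendsto.liminf_eq ?_)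
  have hz : Filter.Tendsto (fun n : ℕ => ENNReal.ofReal (M * ((n : ℝ) + 1)⁻¹)) Filter.atTop
      (nhds 0) := by
    have h1 : Filter.Tendsto (fun n : ℕ => M * (((n : ℝ) + 1)⁻¹)) Filter.atTop (nhds (M * 0)) := by
      refine Filter.Tendsto.const_mul _ ?_
      simpa using tendsto_one_div_add_atTop_nhds_zero_nat (𝕜 := ℝ)
    have := ENNReal.tendsto_ofReal h1
    simpa using this
  have h2 := ENNReal.Tendsto.mul_const hz (b := eLpNorm f 2 volume)
    (Or.inr (hf.memLp 2).eLpNorm_ne_top)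
  rw [zero_mul] at h2
  have h3 := (tendsto_const_nhds (x := S)).add h2
  rw [add_zero] at h3
  exact ENNReal.Tendsto.const_mul h3 (Or.inr (by simp))

lemma holder_e {f g h : E3 → ℝ} (hf : Sch f) (hg : Sch g) (hh : Sch h) :
    eLpNorm (f * g * h) 2 volume ≤
      eLpNorm f 6 volume * eLpNorm g 6 volume * eLpNorm h 6 volume := by
  have i1 : ENNReal.HolderTriple 6 6 3 := ⟨by
    rw [← ENNReal.toReal_eq_toReal_iff' (by simp) (by simp)]
    rw [ENNReal.toReal_add (by simp) (by simp)]; norm_num⟩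
  have i2 : ENNReal.HolderTriple 3 6 2 := ⟨by
    rw [← ENNReal.toReal_eq_toReal_iff' (by simp) (by simp)]
    rw [ENNReal.toReal_add (by simp) (by simp)]; norm_num⟩
  have h1 := eLpNorm_smul_le_mul_eLpNorm (p := 3) (q := 6) (r := 2)
    (hh.memLp 2).aestronglyMeasurable ((hf.mul hg).memLp 2).aestronglyMeasurable
  have h2 := eLpNorm_smul_le_mul_eLpNorm (p := 6) (q := 6) (r := 3)
    (hg.memLp 2).aestronglyMeasurable (hf.memLp 2).aestronglyMeasurable
  simp only [smul_eq_mul] at h1 h2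
  refine h1.trans ?_
  gcongr

/-- trilinear estimate -/
lemma tri : ∃ K : ℝ, 1 ≤ K ∧ ∀ (f g h : E3 → ℝ), Sch f → Sch g → Sch h → ∀ A B D : ℝ,
    (∀ i, n2 (pd i f) ≤ A) → (∀ i, n2 (pd i g) ≤ B) → (∀ i, n2 (pd i h) ≤ D) →
    n2 (f * g * h) ≤ K * (A * B * D) := by
  obtain ⟨K, hK⟩ := sob_e
  have aux : ∀ f, Sch f → ∀ A, (∀ i, n2 (pd i f) ≤ A) →
      eLpNorm f 6 volume ≤ ENNReal.ofReal (3 * K * A) := by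
    intro f hf A hA
    refine (hK f hf).trans ?_
    have hA0 : 0 ≤ A := (n2_nonneg _).trans (hA 0)
    calc (K : ENNReal) * ∑ i, eLpNorm (pd i f) 2 volume
        ≤ K * ∑ i : Fin 3, ENNReal.ofReal A := by
          gcongr with i
          rw [eLpNorm_two_eq (hf.pd i)]
          exact ENNReal.ofReal_le_ofReal (hA i)
      _ = ENNReal.ofReal (3 * K * A) := by
          rw [mul_comm (3 : ℝ), mul_assoc, ENNReal.ofReal_mul (by positivity),
            ENNReal.ofReal_mul (by norm_num)]
          simp
  refine ⟨27 * K ^ 3 + 1, by simp, ?_⟩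
  intro f g h hf hg hh A B D hA hB hD
  have hA0 : 0 ≤ A := (n2_nonneg _).trans (hA 0)
  have hB0 : 0 ≤ B := (n2_nonneg _).trans (hB 0)
  have hD0 : 0 ≤ D := (n2_nonneg _).trans (hD 0)
  have h1 : ENNReal.ofReal (n2 (f * g * h)) ≤
      ENNReal.ofReal ((3 * K * A) * (3 * K * B) * (3 * K * D)) := by
    rw [← eLpNorm_two_eq ((hf.mul hg).mul hh), ENNReal.ofReal_mul (by positivity),
      ENNReal.ofReal_mul (by positivity)]
    refine (holder_e hf hg hh).trans ?_
    gcongr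
    · exact aux f hf A hA
    · exact aux g hg B hB
    · exact aux h hh D hD
  rw [ENNReal.ofReal_le_ofReal_iff (by positivity)] at h1
  have : 0 ≤ A * B * D := by positivity
  nlinarith

/-- bilinear estimate -/
lemma bil : ∃ K : ℝ, 1 ≤ K ∧ ∀ (f g : E3 → ℝ), Sch f → Sch g → ∀ A B D : ℝ,
    (∀ i, n2 (pd i f) ≤ A) → n2 g ≤ B → (∀ i, n2 (pd i g) ≤ D) →
    n2 (f * g) ^ 2 ≤ K * (A ^ 2 * B * D) := by
  obtain ⟨K, hK1, hK⟩ := tri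
  refine ⟨K, hK1, fun f g hf hg A B D hA hB hD => ?_⟩
  have h1 := hK f f g hf hf hg A A D hA hA hD
  rw [n2_sq]
  have h2 : f * g * (f * g) = (f * f * g) * g := by ring
  rw [h2]
  have h3 := (abs_le.1 (I_mul_le ((hf.mul hf).mul hg) hg)).2
  calc _ ≤ _ := h3
    _ ≤ (K * (A * A * D)) * B :=
      mul_le_mul h1 hB (n2_nonneg _) ((n2_nonneg _).trans h1)
    _ = _ := by ring

section PartG

/-- Schwartz function with an L² bound. -/
def Bd (f : E3 → ℝ) (M : ℝ) : Prop := Sch f ∧ n2 f ≤ M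

lemma Bd.nonneg {f : E3 → ℝ} {M : ℝ} (h : Bd f M) : 0 ≤ M := (n2_nonneg f).trans h.2
lemma Bd.mono {f : E3 → ℝ} {M N : ℝ} (h : Bd f M) (hMN : M ≤ N) : Bd f N := ⟨h.1, h.2.trans hMN⟩
lemma Bd.add {f g : E3 → ℝ} {M N : ℝ} (hf : Bd f M) (hg : Bd g N) : Bd (f + g) (M + N) :=
  ⟨hf.1.add hg.1, (n2_add hf.1 hg.1).trans (add_le_add hf.2 hg.2)⟩
lemma Bd.two {f : E3 → ℝ} {M : ℝ} (hf : Bd f M) : Bd (2 * f) (2 * M) := by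
  rw [two_mul, two_mul]; exact hf.add hf
lemma Bd.sum3 {f : Fin 3 → E3 → ℝ} {M : ℝ} (hf : ∀ i, Bd (f i) M) : Bd (∑ i, f i) (3 * M) :=
  ⟨Sch.sum fun i => (hf i).1, n2_sum3 (fun i => (hf i).1) fun i => (hf i).2⟩

lemma Bd.lap_mul {f g : E3 → ℝ} (hf : Sm f) (hg : Sm g) {P Q R : ℝ}
    (hP : ∀ l, Bd (pd l (pd l f) * g) P) (hQ : ∀ l, Bd (pd l f * pd l g) Q)
    (hR : ∀ l, Bd (f * pd l (pd l g)) R) : Bd (lap (f * g)) (3 * P + 2 * (3 * Q) + 3 * R) := by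
  rw [_root_.lap_mul hf hg, lap_eq, lap_eq, Finset.sum_mul,
    Finset.mul_sum Finset.univ (fun l => pd l (pd l g)) f]
  exact ((Bd.sum3 hP).add (Bd.sum3 hQ).two).add (Bd.sum3 hR)

/-- basic assumptions on a state -/
structure St (v e : Fin 3 → E3 → ℝ) : Prop where
  hv : ∀ j, Sch (v j)
  he : ∀ k, Sm (e k)
  hd : ∀ i k, Sch (pd i (e k))
  le1 : ∀ k x, |e k x| ≤ 1
  div : ∑ i, pd i (v i) = 0

/-- product bounds -/
structure Sb (v e : Fin 3 → E3 → ℝ) (s1 s2 s3 s4 s5 s6 s7 s8 s9 s10 s11 : ℝ) : Prop where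
  h1 : ∀ a b c i j, Bd (v i * pd a (pd b (pd c (v j)))) s1
  h2 : ∀ a b c i j, Bd (pd a (v i) * pd b (pd c (v j))) s2
  h3 : ∀ a b c q f k m, Bd (pd a (e k) * pd b (pd c (pd q (pd f (e m))))) s3
  h4 : ∀ a b c q f k m, Bd (pd a (pd b (e k)) * pd c (pd q (pd f (e m)))) s4
  h5 : ∀ a b c q f k m n, Bd (pd a (e k) * pd b (e m) * pd c (pd q (pd f (e n)))) s5
  h6 : ∀ a b c q f k m n, Bd (pd a (e k) * pd b (pd c (e m)) * pd q (pd f (e n))) s6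
  h7 : ∀ a b c q k j, Bd (pd a (e k) * pd b (pd c (pd q (v j)))) s7
  h8 : ∀ a b c q k j, Bd (pd a (pd b (e k)) * pd c (pd q (v j))) s8
  h9 : ∀ a b c q k j, Bd (pd a (v j) * pd b (pd c (pd q (e k)))) s9
  h10 : ∀ a b c q f k j, Bd (pd a (v j) * pd b (pd c (pd q (pd f (e k))))) s10
  h11 : ∀ a b c q f k j, Bd (pd a (pd b (pd c (e k))) * pd q (pd f (v j))) s11

variable {v e : Fin 3 → E3 → ℝ} {s1 s2 s3 s4 s5 s6 s7 s8 s9 s10 s11 : ℝ}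

lemma bd_uu (st : St v e) (sb : Sb v e s1 s2 s3 s4 s5 s6 s7 s8 s9 s10 s11) (j : Fin 3) :
    Bd (lap (∑ i, v i * pd i (v j))) (27 * s2 + 9 * s1) := by
  have hs : ∀ j, Sm (v j) := fun j => (st.hv j).sm
  rw [lap_sum (fun i => (hs i).mul ((hs j).pd i))]
  have : ∀ i, Bd (lap (v i * pd i (v j))) (3 * s2 + 2 * (3 * s2) + 3 * s1) := fun i =>
    Bd.lap_mul (hs i) ((hs j).pd i) (fun l => by rw [mul_comm]; exact sb.h2 _ _ _ _ _)
      (fun l => sb.h2 _ _ _ _ _) (fun l => sb.h1 _ _ _ _ _)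
  exact (Bd.sum3 this).mono (by linarith)

lemma bd_dd1 (st : St v e) (sb : Sb v e s1 s2 s3 s4 s5 s6 s7 s8 s9 s10 s11) (a b c k m : Fin 3) :
    Bd (lap (pd a (pd b (e k)) * pd c (e m))) (3 * s3 + 9 * s4) := by
  refine (Bd.lap_mul (P := s3) (Q := s4) (R := s4) (((st.he k).pd b).pd a) ((st.he m).pd c)
    (fun l => ?_) (fun l => ?_) (fun l => ?_)).mono (by linarith)
  · rw [mul_comm]; exact sb.h3 _ _ _ _ _ _ _
  · rw [mul_comm]; exact sb.h4 _ _ _ _ _ _ _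
  · exact sb.h4 _ _ _ _ _ _ _

lemma bd_dd2 (st : St v e) (sb : Sb v e s1 s2 s3 s4 s5 s6 s7 s8 s9 s10 s11) (a b c k m : Fin 3) :
    Bd (lap (pd a (pd b (e k) * pd c (e m)))) (6 * s3 + 18 * s4) := by
  have h1 := (st.he k).pd b
  have h2 := (st.he m).pd c
  rw [pd_mul h1 h2, lap_add ((h1.pd a).mul h2) (h1.mul (h2.pd a)), mul_comm (pd b (e k))]
  exact ((bd_dd1 st sb a b c k m).add (bd_dd1 st sb a c b m k)).mono (by linarith)

lemma bd_dd (st : St v e) (sb : Sb v e s1 s2 s3 s4 s5 s6 s7 s8 s9 s10 s11) (j : Fin 3) :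
    Bd (lap (∑ i, pd i (∑ k, pd i (e k) * pd j (e k)))) (54 * s3 + 162 * s4) := by
  have h : ∀ i j k, Sm (pd i (e k) * pd j (e k)) :=
    fun i j k => ((st.he k).pd i).mul ((st.he k).pd j)
  rw [lap_sum (fun i => (Sm.sum fun k => h i j k).pd i)]
  have : ∀ i, Bd (lap (pd i (∑ k, pd i (e k) * pd j (e k)))) (3 * (6 * s3 + 18 * s4)) := by
    intro i
    rw [pd_sum (fun k => h i j k), lap_sum (fun k => (h i j k).pd i)]
    exact Bd.sum3 fun k => bd_dd2 st sb i i j k k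
  exact (Bd.sum3 this).mono (by linarith)

lemma bd_mul_e {X : E3 → ℝ} {M : ℝ} (hX : Bd X M) {w : E3 → ℝ} (hw : ∀ x, |w x| ≤ 1)
    (hXw : Sch (X * w)) : Bd (X * w) M := by
  refine ⟨hXw, le_trans ?_ hX.2⟩
  refine Real.sqrt_le_sqrt ?_
  refine integral_mono (hXw.mul hXw).integrable (hX.1.mul hX.1).integrable fun x => ?_
  simp only [Pi.mul_apply]
  have h1 : w x ^ 2 ≤ 1 := by
    have := hw x
    rw [← sq_abs]; nlinarith [abs_nonneg (w x)]
  nlinarith [sq_nonneg (X x), mul_le_mul_of_nonneg_left h1 (sq_nonneg (X x))]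

lemma St.temp (st : St v e) (k : Fin 3) : (e k).HasTemperateGrowth := by
  have hfd : fderiv ℝ (e k) = ∑ i, fun x => pd i (e k) x • (EuclideanSpace.proj i : E3 →L[ℝ] ℝ) := by
    ext x w
    have hw : w = ∑ i, w i • (EuclideanSpace.single i 1 : E3) := by
      ext j
      simp [Fin.sum_univ_three]
      fin_cases j <;> simp
    conv_lhs => rw [hw]
    rw [map_sum]
    simp [pd, mul_comm]
  refine Function.HasTemperateGrowth.of_fderiv ?_ (st.he k).diff (k := 0) (C := 1) (fun x => ?_)
  · rw [hfd]
    have hi : ∀ i ∈ (Finset.univ : Finset (Fin 3)), (fun x => pd i (e k) x •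
        (EuclideanSpace.proj i : E3 →L[ℝ] ℝ)).HasTemperateGrowth := ?_
    · convert Function.HasTemperateGrowth.sum hi using 1
      ext x; simp
    intro i _
    obtain ⟨g, hg⟩ := st.hd i k
    have h1 : (pd i (e k)).HasTemperateGrowth := by
      have := g.hasTemperateGrowth
      rwa [hg] at this
    have h2 : (fun _ : E3 => (EuclideanSpace.proj i : E3 →L[ℝ] ℝ)).HasTemperateGrowth :=
      Function.HasTemperateGrowth.const _
    exact h1.smul h2
  · simpa using st.le1 k x

lemma St.sch_mul (st : St v e) {X : E3 → ℝ} (hX : Sch X) (k : Fin 3) : Sch (X * e k) := by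
  rw [mul_comm]; exact Sch.tmul (st.temp k) hX

lemma bd_h1 (st : St v e) (sb : Sb v e s1 s2 s3 s4 s5 s6 s7 s8 s9 s10 s11) (i l m k : Fin 3) :
    Bd (pd i (lap ((pd l (e m) * pd l (e m)) * e k)))
      (6 * s3 + 18 * s4 + 27 * s5 + 36 * s6) := by
  have hg := st.hd l m
  have hgs := hg.sm
  have hf := hg.mul hg
  have hfs := hf.sm
  have he := st.he k
  have p3 := (sb.h3 0 0 0 0 0 0 0).nonneg
  have p4 := (sb.h4 0 0 0 0 0 0 0).nonneg
  have p5 := (sb.h5 0 0 0 0 0 0 0 0).nonneg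
  have p6 := (sb.h6 0 0 0 0 0 0 0 0).nonneg
  have d1 : ∀ a, pd a (pd l (e m) * pd l (e m)) = 2 * (pd l (e m) * pd a (pd l (e m))) := by
    intro a; rw [pd_mul hgs hgs]; ring
  have d2 : ∀ a b, pd a (pd b (pd l (e m) * pd l (e m))) =
      2 * (pd a (pd l (e m)) * pd b (pd l (e m)) + pd l (e m) * pd a (pd b (pd l (e m)))) := by
    intro a b
    rw [d1, two_mul, two_mul, pd_add (hgs.mul (hgs.pd b)) (hgs.mul (hgs.pd b)),
      pd_mul hgs (hgs.pd b)]
  -- the six types of terms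
  have t2 : ∀ a b c, Bd (pd a (pd b (pd l (e m) * pd l (e m))) * pd c (e k))
      (2 * (s6 + s5)) := by
    intro a b c
    rw [d2, mul_assoc, add_mul]
    refine Bd.two (Bd.add ?_ ?_)
    · have := sb.h6 c a l b l k m m
      rwa [mul_assoc, mul_comm] at this
    · have := sb.h5 l c a b l m k m
      rw [mul_assoc, mul_comm (pd c (e k)), ← mul_assoc] at this
      exact this
  have t3 : ∀ a b c, Bd (pd a (pd l (e m) * pd l (e m)) * pd b (pd c (e k))) (2 * s6) := by
    intro a b c
    rw [d1, mul_assoc]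
    exact Bd.two (sb.h6 _ _ _ _ _ _ _ _)
  have t4 : ∀ a b c, Bd ((pd l (e m) * pd l (e m)) * pd a (pd b (pd c (e k)))) s5 :=
    fun a b c => sb.h5 _ _ _ _ _ _ _ _
  have t1 : Bd (lap (pd i (pd l (e m) * pd l (e m)))) (6 * s3 + 18 * s4) :=
    bd_dd2 st sb i l l m m
  rw [← lap_pd (hfs.mul he), pd_mul hfs he,
    lap_add ((hfs.pd i).mul he) (hfs.mul (he.pd i)), lap_mul (hfs.pd i) he]
  have q1 : Bd (lap (pd i (pd l (e m) * pd l (e m))) * e k) (6 * s3 + 18 * s4) :=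
    bd_mul_e t1 (st.le1 k) (st.sch_mul t1.1 k)
  have q2 := (Bd.sum3 fun a => t2 a i a).two
  have q3 : Bd (pd i (pd l (e m) * pd l (e m)) * lap (e k)) (3 * (2 * s6)) := by
    rw [lap_eq, Finset.mul_sum]
    exact Bd.sum3 fun a => t3 i a a
  have q4 := Bd.lap_mul hfs (he.pd i) (fun a => t2 a a i) (fun a => t3 a a i)
    (fun a => t4 a a i)
  exact (((q1.add q2).add q3).add q4).mono (by linarith)

lemma bd_h (st : St v e) (sb : Sb v e s1 s2 s3 s4 s5 s6 s7 s8 s9 s10 s11) (i k : Fin 3) :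
    Bd (pd i (lap ((∑ l, ∑ m, pd l (e m) * pd l (e m)) * e k)))
      (9 * (6 * s3 + 18 * s4 + 27 * s5 + 36 * s6)) := by
  have hs : ∀ l m, Sm (pd l (e m) * pd l (e m) * e k) := fun l m =>
    (((st.he m).pd l).mul ((st.he m).pd l)).mul (st.he k)
  simp only [Finset.sum_mul]
  rw [lap_sum (fun l => Sm.sum fun m => hs l m), pd_sum (fun l => (Sm.sum fun m => hs l m).lap)]
  have : ∀ l, Bd (pd i (lap (∑ m, pd l (e m) * pd l (e m) * e k)))
      (3 * (6 * s3 + 18 * s4 + 27 * s5 + 36 * s6)) := by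
    intro l
    rw [lap_sum (fun m => hs l m), pd_sum (fun m => (hs l m).lap)]
    exact Bd.sum3 fun m => bd_h1 st sb i l m k
  exact (Bd.sum3 this).mono (by linarith)

/-- first part of the Laplacian of the transport term -/
def rest (v e : Fin 3 → E3 → ℝ) (k l : Fin 3) : E3 → ℝ :=
  lap (v l) * pd l (e k) + 2 * ∑ m, pd m (v l) * pd m (pd l (e k))

lemma bd_rest (st : St v e) (sb : Sb v e s1 s2 s3 s4 s5 s6 s7 s8 s9 s10 s11) (i k l : Fin 3) :
    Bd (pd i (rest v e k l)) (3 * s7 + 9 * s8 + 6 * s9) := by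
  have hv : ∀ j, Sm (v j) := fun j => (st.hv j).sm
  have he := st.he k
  unfold rest
  have hm : ∀ m, Sm (pd m (v l) * pd m (pd l (e k))) :=
    fun m => ((hv l).pd m).mul ((he.pd l).pd m)
  have hS : Sm (∑ m, pd m (v l) * pd m (pd l (e k))) := Sm.sum hm
  rw [pd_add ((hv l).lap.mul (he.pd l)) hS.two_mul, two_mul, pd_add hS hS, ← two_mul, pd_sum hm,
    pd_mul (hv l).lap (he.pd l)]
  have q1 : Bd (pd i (lap (v l)) * pd l (e k)) (3 * s7) := by
    rw [lap_eq, pd_sum (fun a => ((hv l).pd a).pd a), Finset.sum_mul]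
    exact Bd.sum3 fun a => by rw [mul_comm]; exact sb.h7 _ _ _ _ _ _
  have q2 : Bd (lap (v l) * pd i (pd l (e k))) (3 * s8) := by
    rw [lap_eq, Finset.sum_mul]
    exact Bd.sum3 fun a => by rw [mul_comm]; exact sb.h8 _ _ _ _ _ _
  have q3 : ∀ m, Bd (pd i (pd m (v l) * pd m (pd l (e k)))) (s8 + s9) := by
    intro m
    rw [pd_mul ((hv l).pd m) ((he.pd l).pd m)]
    exact Bd.add (by rw [mul_comm]; exact sb.h8 _ _ _ _ _ _) (sb.h9 _ _ _ _ _ _)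
  exact ((q1.add q2).add (Bd.sum3 q3).two).mono (by linarith)

lemma lap_transport (st : St v e) (k : Fin 3) :
    lap (∑ l, v l * pd l (e k)) = ∑ l, rest v e k l + ∑ l, v l * pd l (lap (e k)) := by
  have hv : ∀ j, Sm (v j) := fun j => (st.hv j).sm
  have he := st.he k
  rw [lap_sum (fun l => (hv l).mul (he.pd l)), ← Finset.sum_add_distrib]
  refine Finset.sum_congr rfl fun l _ => ?_
  rw [lap_mul (hv l) (he.pd l), lap_pd he, rest]

lemma St.lap_e (st : St v e) (k : Fin 3) : Sch (lap (e k)) := by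
  rw [lap_eq]; exact Sch.sum fun i => (st.hd i k).pd i

lemma St.rest (st : St v e) (k l : Fin 3) : Sch (rest v e k l) :=
  ((st.hv l).lap.mul (st.hd l k)).add
    (Sch.sum fun m => ((st.hv l).pd m).mul ((st.hd l k).pd m)).two_mul

/-- the transport term is skew -/
lemma transport_skew (st : St v e) {w : E3 → ℝ} (hw : Sch w) :
    I (w * ∑ l, v l * pd l w) = 0 := by
  have h1 : ∀ l, I (w * (v l * pd l w)) = - I (pd l (v l) * (w * w)) - I (w * (v l * pd l w)) := by
    intro l
    have := ibp ((st.hv l).mul hw) hw l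
    rw [pd_mul (st.hv l).sm hw.sm, add_mul,
      I_add (((((st.hv l).pd l).mul hw)).mul hw) ((((st.hv l).mul (hw.pd l))).mul hw)] at this
    rw [show v l * pd l w * w = v l * w * pd l w by ring] at this
    rw [show w * (v l * pd l w) = v l * w * pd l w by ring,
      show pd l (v l) * (w * w) = pd l (v l) * w * w by ring]
    linarith
  have h2 : ∑ l, I (pd l (v l) * (w * w)) = 0 := by
    rw [← I_sum (fun l => ((st.hv l).pd l).mul (hw.mul hw)), ← Finset.sum_mul, st.div, zero_mul]
    simp [I]
  rw [Finset.mul_sum, I_sum (fun l => hw.mul ((st.hv l).mul (hw.pd l)))]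
  have h3 : ∑ l, I (w * (v l * pd l w)) =
      - ∑ l, I (pd l (v l) * (w * w)) - ∑ l, I (w * (v l * pd l w)) := by
    rw [← Finset.sum_neg_distrib, ← Finset.sum_sub_distrib]
    exact Finset.sum_congr rfl fun l _ => h1 l
  rw [h2] at h3
  linarith

lemma bd_tr (st : St v e) (sb : Sb v e s1 s2 s3 s4 s5 s6 s7 s8 s9 s10 s11) (k : Fin 3) :
    ∃ X, Bd X (27 * s11 + 54 * s10) ∧ lap (∑ l, v l * pd l (lap (e k))) =
      X + ∑ l, v l * pd l (lap (lap (e k))) := by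
  have hv : ∀ j, Sm (v j) := fun j => (st.hv j).sm
  have hw := (st.lap_e k).sm
  have he := st.he k
  refine ⟨∑ l, (lap (v l) * pd l (lap (e k)) + 2 * ∑ m, pd m (v l) * pd m (pd l (lap (e k)))),
    ?_, ?_⟩
  · have e1 : ∀ l, pd l (lap (e k)) = ∑ a, pd l (pd a (pd a (e k))) := by
      intro l; rw [lap_eq, pd_sum (fun a => (he.pd a).pd a)]
    have q1 : ∀ l, Bd (lap (v l) * pd l (lap (e k))) (3 * (3 * s11)) := by
      intro l
      rw [e1, lap_eq, Finset.sum_mul]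
      refine Bd.sum3 fun a => ?_
      rw [Finset.mul_sum]
      exact Bd.sum3 fun b => by rw [mul_comm]; exact sb.h11 _ _ _ _ _ _ _
    have q2 : ∀ l m, Bd (pd m (v l) * pd m (pd l (lap (e k)))) (3 * s10) := by
      intro l m
      rw [e1, pd_sum (fun a => ((he.pd a).pd a).pd l), Finset.mul_sum]
      exact Bd.sum3 fun a => sb.h10 _ _ _ _ _ _ _
    exact (Bd.sum3 fun l => (q1 l).add (Bd.sum3 (q2 l)).two).mono (by linarith)
  · rw [lap_sum (fun l => (hv l).mul (hw.pd l)), ← Finset.sum_add_distrib]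
    refine Finset.sum_congr rfl fun l _ => ?_
    rw [lap_mul (hv l) (hw.pd l), lap_pd hw]

end PartG

section PartH

lemma I_grad {f g : E3 → ℝ} (hf : Sch f) (hg : Sch g) :
    ∑ i, I (pd i f * pd i g) = - I (lap f * g) := by
  rw [lap_eq, Finset.sum_mul, I_sum (fun i => ((hf.pd i).pd i).mul hg), ← Finset.sum_neg_distrib]
  exact Finset.sum_congr rfl fun i _ => ibp (hf.pd i) hg i

lemma I_lap {f g : E3 → ℝ} (hf : Sch f) (hg : Sch g) :
    I (f * lap g) = - ∑ i, I (pd i f * pd i g) := by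
  rw [lap_eq, Finset.mul_sum, I_sum (fun i => hf.mul ((hg.pd i).pd i)), ← Finset.sum_neg_distrib]
  exact Finset.sum_congr rfl fun i _ => ibp hf (hg.pd i) i

lemma I_le {f g : E3 → ℝ} {A B : ℝ} (hf : Bd f A) (hg : Bd g B) : |I (f * g)| ≤ A * B :=
  (I_mul_le hf.1 hg.1).trans (mul_le_mul hf.2 hg.2 (n2_nonneg _) hf.nonneg)

lemma I_grad_le {f g : E3 → ℝ} {A B : ℝ} (hf : ∀ i, Bd (pd i f) A) (hg : ∀ i, Bd (pd i g) B) :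
    |∑ i, I (pd i f * pd i g)| ≤ 3 * (A * B) := by
  refine (Finset.abs_sum_le_sum_abs _ _).trans ?_
  refine (Finset.sum_le_sum fun i _ => I_le (hf i) (hg i)).trans ?_
  simp

lemma lap_zero : lap (0 : E3 → ℝ) = 0 := by
  have : ∀ i, pd i (0 : E3 → ℝ) = 0 := by
    intro i; ext x; simp [pd]
  rw [lap_eq]; simp [this]

/-- right-hand side of the momentum equation -/
def VT (v e : Fin 3 → E3 → ℝ) (p : E3 → ℝ) (j : Fin 3) : E3 → ℝ :=
  lap (v j) - ∑ i, v i * pd i (v j) - pd j p - ∑ i, pd i (∑ k, pd i (e k) * pd j (e k))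

/-- the quadratic director term -/
def HT (e : Fin 3 → E3 → ℝ) (k : Fin 3) : E3 → ℝ := (∑ l, ∑ m, pd l (e m) * pd l (e m)) * e k

/-- right-hand side of the director equation -/
def ET (v e : Fin 3 → E3 → ℝ) (k : Fin 3) : E3 → ℝ :=
  lap (e k) - ∑ l, v l * pd l (e k) + HT e k

variable {v e : Fin 3 → E3 → ℝ} {s1 s2 s3 s4 s5 s6 s7 s8 s9 s10 s11 : ℝ}

lemma core_u (st : St v e) (sb : Sb v e s1 s2 s3 s4 s5 s6 s7 s8 s9 s10 s11) {p : E3 → ℝ}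
    (hp : Sm p) (hp' : ∀ j, Sch (pd j p)) {a4 : ℝ} (ha : ∀ j, n2 (lap (lap (v j))) ≤ a4) :
    ∑ j, ∑ i, I (pd i (lap (v j)) * pd i (lap (VT v e p j))) ≤
      - ∑ j, I (lap (lap (v j)) * lap (lap (v j))) +
        3 * (a4 * (27 * s2 + 9 * s1)) + 3 * (a4 * (54 * s3 + 162 * s4)) := by
  have hv := st.hv
  have hN : ∀ j, Sch (∑ i, v i * pd i (v j)) := fun j => Sch.sum fun i => (hv i).mul ((hv j).pd i)
  have hB : ∀ j, Sch (∑ i, pd i (∑ k, pd i (e k) * pd j (e k))) := fun j =>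
    Sch.sum fun i => Sch.pd (Sch.sum fun k => (st.hd i k).mul (st.hd j k)) i
  have hq : Sch (lap p) := by rw [lap_eq]; exact Sch.sum fun i => (hp' i).pd i
  have hVT : ∀ j, Sch (VT v e p j) := fun j => (((hv j).lap.sub (hN j)).sub (hp' j)).sub (hB j)
  have e1 : ∀ j, lap (VT v e p j) = lap (lap (v j)) - lap (∑ i, v i * pd i (v j)) - pd j (lap p)
      - lap (∑ i, pd i (∑ k, pd i (e k) * pd j (e k))) := by
    intro j
    rw [VT, lap_sub (((hv j).lap.sub (hN j)).sub (hp' j)).sm (hB j).sm,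
      lap_sub ((hv j).lap.sub (hN j)).sm (hp' j).sm, lap_sub (hv j).lap.sm (hN j).sm, lap_pd hp]
  have hW : ∀ j, Sch (lap (lap (v j))) := fun j => (hv j).lap.lap
  have e2 : ∀ j, ∑ i, I (pd i (lap (v j)) * pd i (lap (VT v e p j))) =
      - I (lap (lap (v j)) * lap (lap (v j))) + I (lap (lap (v j)) * lap (∑ i, v i * pd i (v j)))
      + I (lap (lap (v j)) * lap (∑ i, pd i (∑ k, pd i (e k) * pd j (e k))))
      - I (pd j (lap (lap (v j))) * lap p) := by
    intro j
    rw [I_grad (hv j).lap (hVT j).lap, e1, mul_sub, mul_sub, mul_sub,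
      I_sub ((((hW j).mul (hW j)).sub ((hW j).mul (hN j).lap)).sub ((hW j).mul (hq.pd j)))
        ((hW j).mul (hB j).lap),
      I_sub (((hW j).mul (hW j)).sub ((hW j).mul (hN j).lap)) ((hW j).mul (hq.pd j)),
      I_sub ((hW j).mul (hW j)) ((hW j).mul (hN j).lap), ibp (hW j) hq]
    ring
  have e3 : ∑ j, I (pd j (lap (lap (v j))) * lap p) = 0 := by
    rw [← I_sum (fun j => ((hW j).pd j).mul hq), ← Finset.sum_mul]
    have : ∑ j, pd j (lap (lap (v j))) = lap (lap (∑ j, pd j (v j))) := by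
      rw [lap_sum (fun j => ((hv j).pd j).sm), lap_sum (fun j => ((hv j).pd j).lap.sm)]
      exact Finset.sum_congr rfl fun j _ => by rw [lap_pd (hv j).sm, lap_pd (hv j).lap.sm]
    rw [this, st.div, lap_zero, lap_zero, zero_mul]; simp [I]
  have b1 : ∀ j, I (lap (lap (v j)) * lap (∑ i, v i * pd i (v j))) ≤ a4 * (27 * s2 + 9 * s1) :=
    fun j => (abs_le.1 (I_le ⟨hW j, ha j⟩ (bd_uu st sb j))).2
  have b2 : ∀ j, I (lap (lap (v j)) * lap (∑ i, pd i (∑ k, pd i (e k) * pd j (e k)))) ≤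
      a4 * (54 * s3 + 162 * s4) :=
    fun j => (abs_le.1 (I_le ⟨hW j, ha j⟩ (bd_dd st sb j))).2
  simp only [e2, Finset.sum_add_distrib, Finset.sum_sub_distrib, e3, Finset.sum_neg_distrib]
  have c1 := Finset.sum_le_sum fun j (_ : j ∈ (Finset.univ : Finset (Fin 3))) => b1 j
  have c2 := Finset.sum_le_sum fun j (_ : j ∈ (Finset.univ : Finset (Fin 3))) => b2 j
  simp only [Finset.sum_const, Finset.card_univ, Fintype.card_fin, nsmul_eq_mul,
    Nat.cast_ofNat] at c1 c2
  linarith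

lemma core_d (st : St v e) (sb : Sb v e s1 s2 s3 s4 s5 s6 s7 s8 s9 s10 s11) {b4 b5 : ℝ}
    (hb4 : ∀ k, n2 (lap (lap (e k))) ≤ b4) (hb5 : ∀ i k, n2 (pd i (lap (lap (e k)))) ≤ b5)
    (k : Fin 3) :
    I (lap (lap (e k)) * lap (lap (ET v e k))) ≤
      - ∑ i, I (pd i (lap (lap (e k))) * pd i (lap (lap (e k)))) +
        9 * (b5 * (3 * s7 + 9 * s8 + 6 * s9)) + b4 * (27 * s11 + 54 * s10) +
        3 * (b5 * (9 * (6 * s3 + 18 * s4 + 27 * s5 + 36 * s6))) := by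
  have hv := st.hv
  have hL := st.lap_e k
  have hW := hL.lap
  have hN : Sch (∑ l, v l * pd l (e k)) := Sch.sum fun l => (hv l).mul (st.hd l k)
  have hH : Sch (HT e k) :=
    st.sch_mul (Sch.sum fun l => Sch.sum fun m => (st.hd l m).mul (st.hd l m)) k
  obtain ⟨X, hX, eX⟩ := bd_tr st sb k
  have hR : ∀ l, Sch (rest v e k l) := fun l => st.rest k l
  have hT : Sch (∑ l, v l * pd l (lap (e k))) := Sch.sum fun l => (hv l).mul (hL.pd l)
  have hT2 : Sch (∑ l, v l * pd l (lap (lap (e k)))) := Sch.sum fun l => (hv l).mul (hW.pd l)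
  have e1 : lap (lap (ET v e k)) = lap (lap (lap (e k))) - (∑ l, lap (rest v e k l) +
      (X + ∑ l, v l * pd l (lap (lap (e k))))) + lap (lap (HT e k)) := by
    rw [ET, lap_add (hL.sub hN).sm hH.sm, lap_sub hL.sm hN.sm, lap_transport st,
      lap_add (hW.sub ((Sch.sum hR).add hT)).sm hH.lap.sm, lap_sub hW.sm ((Sch.sum hR).add hT).sm,
      lap_add (Sch.sum hR).sm hT.sm, lap_sum (fun l => (hR l).sm), eX]
  have hRs : Sch (∑ l, lap (rest v e k l)) := Sch.sum fun l => (hR l).lap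
  rw [e1, mul_add, mul_sub, mul_add, mul_add,
    I_add ((hW.mul hW.lap).sub ((hW.mul hRs).add ((hW.mul hX.1).add (hW.mul hT2))))
      (hW.mul hH.lap.lap),
    I_sub (hW.mul hW.lap) ((hW.mul hRs).add ((hW.mul hX.1).add (hW.mul hT2))),
    I_add (hW.mul hRs) ((hW.mul hX.1).add (hW.mul hT2)), I_add (hW.mul hX.1) (hW.mul hT2),
    transport_skew st hW, I_lap hW hW, I_lap hW hH.lap, Finset.mul_sum,
    I_sum (fun l => hW.mul (hR l).lap)]
  have c1 : -(9 * (b5 * (3 * s7 + 9 * s8 + 6 * s9))) ≤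
      ∑ l, I (lap (lap (e k)) * lap (rest v e k l)) := by
    have : ∀ l, -(3 * (b5 * (3 * s7 + 9 * s8 + 6 * s9))) ≤
        I (lap (lap (e k)) * lap (rest v e k l)) := by
      intro l
      rw [I_lap hW (hR l)]
      have := (abs_le.1 (I_grad_le (fun i => ⟨hW.pd i, hb5 i k⟩)
        (fun i => bd_rest st sb i k l))).2
      linarith
    have := Finset.sum_le_sum fun l (_ : l ∈ (Finset.univ : Finset (Fin 3))) => this l
    simp only [Finset.sum_const, Finset.card_univ, Fintype.card_fin, nsmul_eq_mul,
      Nat.cast_ofNat] at this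
    linarith
  have c2 := (abs_le.1 (I_le ⟨hW, hb4 k⟩ hX)).1
  have c3 := (abs_le.1 (I_grad_le (fun i => ⟨hW.pd i, hb5 i k⟩)
        (fun i => bd_h st sb i k))).1
  unfold HT
  linarith

end PartH

section PartJ

/-- smooth with Schwartz gradient -/
def Gs (f : E3 → ℝ) : Prop := Sm f ∧ ∀ i, Sch (pd i f)

lemma Sch.gs {f : E3 → ℝ} (hf : Sch f) : Gs f := ⟨hf.sm, fun i => hf.pd i⟩
lemma Gs.lap {f : E3 → ℝ} (hf : Gs f) : Sch (lap f) := by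
  rw [lap_eq]; exact Sch.sum fun i => (hf.2 i).pd i

lemma I_hess {f : E3 → ℝ} (hf : Gs f) :
    ∑ j, ∑ i, I (pd i (pd j f) * pd i (pd j f)) = I (lap f * lap f) := by
  have h1 : ∀ j, ∑ i, I (pd i (pd j f) * pd i (pd j f)) = - I (pd j (lap f) * pd j f) := by
    intro j
    rw [I_grad (hf.2 j) (hf.2 j), lap_pd hf.1]
  simp only [h1]
  conv_rhs => rw [lap_eq f]
  rw [← lap_eq f, lap_eq f, Finset.mul_sum,
    I_sum (fun i => (by rw [← lap_eq f]; exact hf.lap : Sch (∑ i, pd i (pd i f))).mul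
      ((hf.2 i).pd i)), ← lap_eq f]
  exact Finset.sum_congr rfl fun i _ => (ibp hf.lap (hf.2 i) i).symm

lemma n2_le_of {f g : E3 → ℝ} (h : I (f * f) ≤ I (g * g)) : n2 f ≤ n2 g := Real.sqrt_le_sqrt h

lemma n2_d2 {f : E3 → ℝ} (hf : Gs f) (i j : Fin 3) : n2 (pd i (pd j f)) ≤ n2 (lap f) := by
  refine n2_le_of ?_
  rw [← I_hess hf]
  refine le_trans ?_ (Finset.single_le_sum (f := fun j => ∑ i, I (pd i (pd j f) * pd i (pd j f)))
    (fun j _ => Finset.sum_nonneg fun i _ => I_sq_nonneg _) (Finset.mem_univ j))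
  exact Finset.single_le_sum (f := fun i => I (pd i (pd j f) * pd i (pd j f)))
    (fun j _ => I_sq_nonneg _) (Finset.mem_univ i)

lemma n2_d3 {f : E3 → ℝ} (hf : Gs f) (i j k : Fin 3) :
    n2 (pd i (pd j (pd k f))) ≤ n2 (pd k (lap f)) := by
  rw [← lap_pd hf.1]; exact n2_d2 (hf.2 k).gs i j

lemma n2_d4 {f : E3 → ℝ} (hf : Gs f) (i j k l : Fin 3) :
    n2 (pd i (pd j (pd k (pd l f)))) ≤ n2 (lap (lap f)) := by
  refine (n2_d2 ((hf.2 l).pd k).gs i j).trans ?_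
  rw [lap_pd (hf.2 l).sm, lap_pd hf.1]
  exact n2_d2 hf.lap.gs k l

lemma n2_d5 {f : E3 → ℝ} (hf : Gs f) (i j k l m : Fin 3) :
    n2 (pd i (pd j (pd k (pd l (pd m f))))) ≤ n2 (pd m (lap (lap f))) := by
  refine (n2_d4 (hf.2 m).gs i j k l).trans ?_
  rw [lap_pd hf.1, lap_pd hf.lap.sm]

/-- L² norm of a finite family -/
def NN {ι : Type*} [Fintype ι] (f : ι → E3 → ℝ) : ℝ := Real.sqrt (∑ i, I (f i * f i))

section
variable {ι : Type*} [Fintype ι] {f g : ι → E3 → ℝ}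

lemma NN_sum_nonneg (f : ι → E3 → ℝ) : 0 ≤ ∑ i, I (f i * f i) :=
  Finset.sum_nonneg fun _ _ => I_sq_nonneg _
lemma NN_nonneg (f : ι → E3 → ℝ) : 0 ≤ NN f := Real.sqrt_nonneg _
lemma NN_sq (f : ι → E3 → ℝ) : NN f ^ 2 = ∑ i, I (f i * f i) := Real.sq_sqrt (NN_sum_nonneg f)
lemma n2_le_NN (f : ι → E3 → ℝ) (i : ι) : n2 (f i) ≤ NN f :=
  Real.sqrt_le_sqrt (Finset.single_le_sum (f := fun i => I (f i * f i))
    (fun _ _ => I_sq_nonneg _) (Finset.mem_univ i))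
lemma NN_cs (hf : ∀ i, Sch (f i)) (hg : ∀ i, Sch (g i)) :
    |∑ i, I (f i * g i)| ≤ NN f * NN g := by
  refine (Finset.abs_sum_le_sum_abs _ _).trans ?_
  refine (Finset.sum_le_sum fun i _ => I_mul_le (hf i) (hg i)).trans ?_
  refine (Real.sum_mul_le_sqrt_mul_sqrt _ _ _).trans (le_of_eq ?_)
  simp only [n2_sq]; rfl
end

/-- gradient family -/
def gr (f : Fin 3 → E3 → ℝ) (q : Fin 3 × Fin 3) : E3 → ℝ := pd q.1 (f q.2)
/-- Laplacian family -/
def la (f : Fin 3 → E3 → ℝ) (k : Fin 3) : E3 → ℝ := lap (f k)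

lemma n2_gr (f : Fin 3 → E3 → ℝ) (i k : Fin 3) : n2 (pd i (f k)) ≤ NN (gr f) :=
  n2_le_NN (gr f) (i, k)
lemma n2_la (f : Fin 3 → E3 → ℝ) (k : Fin 3) : n2 (lap (f k)) ≤ NN (la f) :=
  n2_le_NN (la f) k

lemma lc1 {f : Fin 3 → E3 → ℝ} (hf : ∀ k, Gs (f k)) :
    NN (la f) ^ 2 ≤ NN (gr f) * NN (gr (la f)) := by
  refine le_trans ?_ (NN_cs (f := gr f) (g := gr (la f)) (fun q => (hf q.2).2 q.1)
    (fun q => (hf q.2).lap.pd q.1))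
  refine le_trans (le_of_eq ?_) (neg_le_abs _)
  rw [NN_sq, Fintype.sum_prod_type_right, ← Finset.sum_neg_distrib]
  refine Finset.sum_congr rfl fun k _ => ?_
  rw [← Finset.sum_neg_distrib]
  have hL := (hf k).lap
  unfold la gr
  dsimp only
  conv_lhs => rw [show lap (f k) * lap (f k) = ∑ i, lap (f k) * pd i (pd i (f k)) by
    rw [← Finset.mul_sum, ← lap_eq]]
  rw [I_sum (fun i => hL.mul (((hf k).2 i).pd i))]
  refine Finset.sum_congr rfl fun i _ => ?_
  rw [ibp hL ((hf k).2 i), mul_comm]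

lemma lc2 {f : Fin 3 → E3 → ℝ} (hf : ∀ k, Sch (f k)) :
    NN (gr f) ^ 2 ≤ NN f * NN (la f) := by
  refine le_trans ?_ (NN_cs (f := f) (g := la f) hf (fun q => (hf q).lap))
  refine le_trans (le_of_eq ?_) (neg_le_abs _)
  rw [NN_sq, Fintype.sum_prod_type_right, ← Finset.sum_neg_distrib]
  refine Finset.sum_congr rfl fun k _ => ?_
  unfold la gr
  dsimp only
  rw [I_lap (hf k) (hf k), neg_neg]

variable {v e : Fin 3 → E3 → ℝ}

lemma St.gv (st : St v e) (k : Fin 3) : Gs (v k) := (st.hv k).gs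
lemma St.ge (st : St v e) (k : Fin 3) : Gs (e k) := ⟨st.he k, fun i => st.hd i k⟩

lemma bil' : ∃ K ≥ (1:ℝ), ∀ f g, Sch f → Sch g → ∀ A B D, (∀ i, n2 (pd i f) ≤ A) → n2 g ≤ B →
    (∀ i, n2 (pd i g) ≤ D) → Bd (f * g) (Real.sqrt (K * (A ^ 2 * B * D))) := by
  obtain ⟨K, hK, h⟩ := bil
  refine ⟨K, hK, fun f g hf hg A B D hA hB hD => ⟨hf.mul hg, ?_⟩⟩
  exact Real.le_sqrt_of_sq_le (h f g hf hg A B D hA hB hD)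

lemma sb_exists : ∃ K ≥ (1:ℝ), ∃ K' ≥ (1:ℝ), ∀ v e, St v e → ∀ a1 a2 a3 a4 b2 b3 b4 b5,
    a1 = NN (gr v) → a2 = NN (la v) → a3 = NN (gr (la v)) → a4 = NN (la (la v)) →
    b2 = NN (la e) → b3 = NN (gr (la e)) → b4 = NN (la (la e)) → b5 = NN (gr (la (la e))) →
    Sb v e (√(K * (a1 ^ 2 * a3 * a4))) (√(K * (a2 ^ 2 * a2 * a3))) (√(K * (b2 ^ 2 * b4 * b5)))
      (√(K * (b3 ^ 2 * b3 * b4))) (K' * (b2 * b2 * b4)) (K' * (b2 * b3 * b3))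
      (√(K * (b2 ^ 2 * a3 * a4))) (√(K * (b3 ^ 2 * a2 * a3))) (√(K * (a2 ^ 2 * b3 * b4)))
      (√(K * (a2 ^ 2 * b4 * b5))) (√(K * (b4 ^ 2 * a2 * a3))) := by
  obtain ⟨K, hK, hb⟩ := bil'
  obtain ⟨K', hK', ht⟩ := tri
  refine ⟨K, hK, K', hK', ?_⟩
  rintro v e st _ _ _ _ _ _ _ _ rfl rfl rfl rfl rfl rfl rfl rfl
  have gv := st.gv
  have ge := st.ge
  have hv := st.hv
  have hd := st.hd
  have v1 : ∀ i k, n2 (pd i (v k)) ≤ NN (gr v) := n2_gr v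
  have v2 : ∀ i j k, n2 (pd i (pd j (v k))) ≤ NN (la v) :=
    fun i j k => (n2_d2 (gv k) _ _).trans (n2_la v k)
  have v3 : ∀ i j l k, n2 (pd i (pd j (pd l (v k)))) ≤ NN (gr (la v)) :=
    fun i j l k => (n2_d3 (gv k) _ _ _).trans (n2_gr (la v) l k)
  have v4 : ∀ i j l m k, n2 (pd i (pd j (pd l (pd m (v k))))) ≤ NN (la (la v)) :=
    fun i j l m k => (n2_d4 (gv k) _ _ _ _).trans (n2_la (la v) k)
  have e2 : ∀ i j k, n2 (pd i (pd j (e k))) ≤ NN (la e) :=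
    fun i j k => (n2_d2 (ge k) _ _).trans (n2_la e k)
  have e3 : ∀ i j l k, n2 (pd i (pd j (pd l (e k)))) ≤ NN (gr (la e)) :=
    fun i j l k => (n2_d3 (ge k) _ _ _).trans (n2_gr (la e) l k)
  have e4 : ∀ i j l m k, n2 (pd i (pd j (pd l (pd m (e k))))) ≤ NN (la (la e)) :=
    fun i j l m k => (n2_d4 (ge k) _ _ _ _).trans (n2_la (la e) k)
  have e5 : ∀ i j l m n k, n2 (pd i (pd j (pd l (pd m (pd n (e k)))))) ≤ NN (gr (la (la e))) :=
    fun i j l m n k => (n2_d5 (ge k) _ _ _ _ _).trans (n2_gr (la (la e)) n k)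
  constructor
  · intro a b c i j
    exact hb _ _ (hv i) ((((hv j).pd c).pd b).pd a) _ _ _ (fun _ => v1 _ _) (v3 _ _ _ _)
      (fun _ => v4 _ _ _ _ _)
  · intro a b c i j
    exact hb _ _ ((hv i).pd a) (((hv j).pd c).pd b) _ _ _ (fun _ => v2 _ _ _) (v2 _ _ _)
      (fun _ => v3 _ _ _ _)
  · intro a b c q f k m
    exact hb _ _ (hd a k) ((((hd f m).pd q).pd c).pd b) _ _ _ (fun _ => e2 _ _ _) (e4 _ _ _ _ _)
      (fun _ => e5 _ _ _ _ _ _)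
  · intro a b c q f k m
    exact hb _ _ ((hd b k).pd a) (((hd f m).pd q).pd c) _ _ _ (fun _ => e3 _ _ _ _) (e3 _ _ _ _)
      (fun _ => e4 _ _ _ _ _)
  · intro a b c q f k m n
    have h1 := hd a k
    have h2 := hd b m
    have h3 := ((hd f n).pd q).pd c
    exact ⟨(h1.mul h2).mul h3, ht _ _ _ h1 h2 h3 _ _ _ (fun _ => e2 _ _ _) (fun _ => e2 _ _ _)
      (fun _ => e4 _ _ _ _ _)⟩
  · intro a b c q f k m n
    have h1 := hd a k
    have h2 := (hd c m).pd b
    have h3 := (hd f n).pd q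
    exact ⟨(h1.mul h2).mul h3, ht _ _ _ h1 h2 h3 _ _ _ (fun _ => e2 _ _ _) (fun _ => e3 _ _ _ _)
      (fun _ => e3 _ _ _ _)⟩
  · intro a b c q k j
    exact hb _ _ (hd a k) ((((hv j).pd q).pd c).pd b) _ _ _ (fun _ => e2 _ _ _) (v3 _ _ _ _)
      (fun _ => v4 _ _ _ _ _)
  · intro a b c q k j
    exact hb _ _ ((hd b k).pd a) (((hv j).pd q).pd c) _ _ _ (fun _ => e3 _ _ _ _) (v2 _ _ _)
      (fun _ => v3 _ _ _ _)
  · intro a b c q k j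
    exact hb _ _ ((hv j).pd a) (((hd q k).pd c).pd b) _ _ _ (fun _ => v2 _ _ _) (e3 _ _ _ _)
      (fun _ => e4 _ _ _ _ _)
  · intro a b c q f k j
    exact hb _ _ ((hv j).pd a) ((((hd f k).pd q).pd c).pd b) _ _ _ (fun _ => v2 _ _ _)
      (e4 _ _ _ _ _) (fun _ => e5 _ _ _ _ _ _)
  · intro a b c q f k j
    exact hb _ _ (((hd c k).pd b).pd a) (((hv j).pd f).pd q) _ _ _ (fun _ => e4 _ _ _ _ _)
      (v2 _ _ _) (fun _ => v3 _ _ _ _)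

/-- vorticity identity -/
lemma curl_id {v : Fin 3 → E3 → ℝ} (hv : ∀ j, Sch (v j)) (div : ∑ i, pd i (v i) = 0) :
    ∑ j, I (curl3 v j * curl3 v j) = ∑ q, I (gr v q * gr v q) := by
  have key : ∑ i, ∑ j, I (pd i (v j) * pd j (v i)) = 0 := by
    have h1 : ∀ i, ∑ j, I (pd i (v j) * pd j (v i)) = 0 := by
      intro i
      have h2 : ∀ j, I (pd i (v j) * pd j (v i)) = - I (pd i (pd j (v j)) * v i) := by
        intro j
        rw [ibp ((hv j).pd i) (hv i), pd_comm (hv j).sm]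
      simp only [h2]
      rw [Finset.sum_neg_distrib, ← I_sum (fun j => (((hv j).pd j).pd i).mul (hv i)),
        ← Finset.sum_mul, ← pd_sum (fun j => ((hv j).pd j).sm), div]
      have : pd i (0 : E3 → ℝ) = 0 := by ext x; simp [pd]
      rw [this, zero_mul]; simp [I]
    simp [h1]
  have c : ∀ a b a' b', I ((pd a (v b) - pd a' (v b')) * (pd a (v b) - pd a' (v b'))) =
      I (pd a (v b) * pd a (v b)) - 2 * I (pd a (v b) * pd a' (v b'))
        + I (pd a' (v b') * pd a' (v b')) := by
    intro a b a' b'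
    have h1 := (hv b).pd a
    have h2 := (hv b').pd a'
    rw [show (pd a (v b) - pd a' (v b')) * (pd a (v b) - pd a' (v b')) =
      pd a (v b) * pd a (v b) - 2 * (pd a (v b) * pd a' (v b')) + pd a' (v b') * pd a' (v b') by
        ring, I_add ((h1.mul h1).sub (h1.mul h2).two_mul) (h2.mul h2),
      I_sub (h1.mul h1) (h1.mul h2).two_mul, I_two]
  have s : ∀ a b, I (pd a (v b) * pd b (v a)) = I (pd b (v a) * pd a (v b)) := by
    intro a b; rw [mul_comm]
  rw [Fintype.sum_prod_type]
  have k0 : curl3 v 0 = pd 1 (v 2) - pd 2 (v 1) := rfl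
  have k1 : curl3 v 1 = pd 2 (v 0) - pd 0 (v 2) := rfl
  have k2 : curl3 v 2 = pd 0 (v 1) - pd 1 (v 0) := rfl
  simp only [Fin.sum_univ_three, k0, k1, k2, c, gr] at key ⊢
  rw [s 2 1, s 1 0, s 2 0] at key
  rw [s 2 0]
  linarith

lemma grad_curl_id {v : Fin 3 → E3 → ℝ} (hv : ∀ j, Sch (v j)) (div : ∑ i, pd i (v i) = 0) :
    ∑ i, ∑ j, I (pd i (curl3 v j) * pd i (curl3 v j)) = ∑ j, I (la v j * la v j) := by
  have e1 : ∀ i j, pd i (curl3 v j) = curl3 (fun k => pd i (v k)) j := by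
    intro i j
    have k0 : curl3 v 0 = pd 1 (v 2) - pd 2 (v 1) := rfl
    have k1 : curl3 v 1 = pd 2 (v 0) - pd 0 (v 2) := rfl
    have k2 : curl3 v 2 = pd 0 (v 1) - pd 1 (v 0) := rfl
    have c : ∀ a b a' b', pd i (pd a (v b) - pd a' (v b')) =
        pd a (pd i (v b)) - pd a' (pd i (v b')) := by
      intro a b a' b'
      rw [pd_sub ((hv b).pd a).sm ((hv b').pd a').sm, pd_comm (hv b).sm, pd_comm (hv b').sm]
    fin_cases j
    · exact c 1 2 2 1
    · exact c 2 0 0 2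
    · exact c 0 1 1 0
  have e2 : ∀ i, ∑ j, I (pd i (curl3 v j) * pd i (curl3 v j)) =
      ∑ q : Fin 3 × Fin 3, I (pd q.1 (pd i (v q.2)) * pd q.1 (pd i (v q.2))) := by
    intro i
    simp only [e1]
    refine curl_id (fun j => (hv j).pd i) ?_
    have : ∑ j, pd j (pd i (v j)) = pd i (∑ j, pd j (v j)) := by
      rw [pd_sum fun j => ((hv j).pd j).sm]
      exact Finset.sum_congr rfl fun j _ => pd_comm (hv j).sm _ _
    rw [this, div]; ext x; simp [pd]
  simp only [e2, Fintype.sum_prod_type_right]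
  rw [Finset.sum_comm]
  exact Finset.sum_congr rfl fun k _ => I_hess (hv k).gs

end PartJ

lemma young {z p R L : ℝ} (hz : 0 ≤ z) (hp : 0 ≤ p) (hR : 0 ≤ R) (hL : 1 ≤ L) (m k : ℕ) (hm : m ≤ 19)
    (hk : k ≠ 0) (h : z ^ (m + k) ≤ p ^ m * R ^ k) : z ≤ p / L + L ^ 19 * R := by
  have hL0 : 0 < L := by linarith
  by_cases hc : z ≤ p / L
  · exact hc.trans (le_add_of_nonneg_right (by positivity))
  · push Not at hc
    rw [div_lt_iff₀ hL0] at hc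
    have hz0 : 0 < z := by
      rcases hz.lt_or_eq with h | h
      · exact h
      · rw [← h] at hc; linarith
    have h1 : z ^ (m + k) ≤ z ^ m * (L ^ m * R) ^ k := by
      refine h.trans ?_
      have h2 : p ^ m ≤ (z * L) ^ m := pow_le_pow_left₀ hp hc.le m
      have h3 : L ^ m ≤ (L ^ m) ^ k := le_self_pow₀ (one_le_pow₀ hL) hk
      calc p ^ m * R ^ k ≤ (z * L) ^ m * R ^ k := by gcongr
        _ = z ^ m * (L ^ m * R ^ k) := by ring
        _ ≤ z ^ m * ((L ^ m) ^ k * R ^ k) := by gcongr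
        _ = _ := by ring
    rw [pow_add] at h1
    have h2 := le_of_mul_le_mul_left h1 (pow_pos hz0 m)
    have h3 : z ≤ L ^ m * R := le_of_pow_le_pow_left₀ hk (by positivity) h2
    have h4 : L ^ m ≤ L ^ 19 := pow_le_pow_right₀ hL hm
    have : 0 ≤ p / L := by positivity
    nlinarith

lemma cubes {x y z w : ℝ} (hx : 0 ≤ x) (hy : 0 ≤ y) (hz : 0 ≤ z) (hw : 0 ≤ w) (h1 : y ^ 2 ≤ x * z)
    (h2 : z ^ 2 ≤ y * w) : z ^ 3 ≤ x * w ^ 2 ∧ y ^ 3 ≤ x ^ 2 * w := by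
  constructor
  · rcases hz.lt_or_eq with h | h
    · have : z * z ^ 3 ≤ z * (x * w ^ 2) := by
        calc z * z ^ 3 = z ^ 2 * z ^ 2 := by ring
          _ ≤ (y * w) * (y * w) := by gcongr
          _ = y ^ 2 * w ^ 2 := by ring
          _ ≤ (x * z) * w ^ 2 := by gcongr
          _ = _ := by ring
      exact le_of_mul_le_mul_left this h
    · rw [← h]; have : 0 ≤ x * w ^ 2 := by positivity
      simpa using this
  · rcases hy.lt_or_eq with h | h
    · have : y * y ^ 3 ≤ y * (x ^ 2 * w) := by
        calc y * y ^ 3 = y ^ 2 * y ^ 2 := by ring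
          _ ≤ (x * z) * (x * z) := by gcongr
          _ = x ^ 2 * z ^ 2 := by ring
          _ ≤ x ^ 2 * (y * w) := by gcongr
          _ = _ := by ring
      exact le_of_mul_le_mul_left this h
    · rw [← h]; have : 0 ≤ x ^ 2 * w := by positivity
      simpa using this

lemma mono_bounds {a1 a2 a3 a4 b2 b3 b4 b5 p R V T : ℝ} (ha1 : 0 ≤ a1) (ha2 : 0 ≤ a2) (ha3 : 0 ≤ a3)
    (ha4 : 0 ≤ a4) (hb2 : 0 ≤ b2) (hb3 : 0 ≤ b3) (hb4 : 0 ≤ b4) (hb5 : 0 ≤ b5)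
    (l1 : a2 ^ 2 ≤ a1 * a3) (l2 : a3 ^ 2 ≤ a2 * a4) (l3 : b3 ^ 2 ≤ b2 * b4)
    (l4 : b4 ^ 2 ≤ b3 * b5) (hpa : a4 ^ 2 ≤ p) (hpb : b5 ^ 2 ≤ p)
    (hV0 : 0 ≤ V) (hT0 : 0 ≤ T) (hV : V ^ 2 = a1 ^ 13 * a3 ^ 3) (hT : T ^ 5 = b2 ^ 14)
    (hVR : V ≤ R) (hTR : T ≤ R) (haR : a2 ^ 14 ≤ R) (hbR : b2 ^ 14 ≤ R) {L : ℝ} (hL : 1 ≤ L)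
    {B : ℝ} (hB : B = p / L + L ^ 19 * R) :
    a1 ^ 2 * a3 * a4 ≤ B ∧ a2 ^ 2 * a2 * a3 ≤ B ∧ b2 ^ 2 * b4 * b5 ≤ B ∧ b3 ^ 2 * b3 * b4 ≤ B ∧
    (b2 * b2 * b4) ^ 2 ≤ B ∧ (b2 * b3 * b3) ^ 2 ≤ B ∧ b2 ^ 2 * a3 * a4 ≤ B ∧
    b3 ^ 2 * a2 * a3 ≤ B ∧ a2 ^ 2 * b3 * b4 ≤ B ∧ b4 * √(a2 ^ 2 * b4 * b5) ≤ B ∧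
    b4 * √(b4 ^ 2 * a2 * a3) ≤ B := by
  subst hB
  have hp : 0 ≤ p := (sq_nonneg _).trans hpa
  have hR : 0 ≤ R := hV0.trans hVR
  obtain ⟨A3, -⟩ := cubes ha1 ha2 ha3 ha4 l1 l2
  obtain ⟨B4, B3⟩ := cubes hb2 hb3 hb4 hb5 l3 l4
  -- mixed bounds
  have m1 : a2 ^ 2 * b2 ^ 8 ≤ R := by
    refine le_of_pow_le_pow_left₀ (n := 14) (by norm_num) hR ?_
    calc (a2 ^ 2 * b2 ^ 8) ^ 14 = (a2 ^ 14) ^ 2 * (b2 ^ 14) ^ 7 * b2 ^ 14 := by ring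
      _ = (a2 ^ 14) ^ 2 * (b2 ^ 14) ^ 7 * T ^ 5 := by rw [hT]
      _ ≤ R ^ 2 * R ^ 7 * R ^ 5 := by gcongr
      _ = R ^ 14 := by ring
  have m2 : a2 ^ 18 * b2 ^ 16 ≤ R ^ 5 := by
    refine le_of_pow_le_pow_left₀ (n := 14) (by norm_num) (by positivity) ?_
    calc (a2 ^ 18 * b2 ^ 16) ^ 14 = (a2 ^ 14) ^ 18 * (b2 ^ 14) ^ 7 * (b2 ^ 14) ^ 9 := by ring
      _ = (a2 ^ 14) ^ 18 * (b2 ^ 14) ^ 7 * (T ^ 5) ^ 9 := by rw [hT]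
      _ ≤ R ^ 18 * R ^ 7 * (R ^ 5) ^ 9 := by gcongr
      _ = (R ^ 5) ^ 14 := by ring
  have m3 : a2 ^ 4 * b2 ^ 2 ≤ R := by
    refine le_of_pow_le_pow_left₀ (n := 7) (by norm_num) hR ?_
    calc (a2 ^ 4 * b2 ^ 2) ^ 7 = (a2 ^ 14) ^ 2 * b2 ^ 14 := by ring
      _ = (a2 ^ 14) ^ 2 * T ^ 5 := by rw [hT]
      _ ≤ R ^ 2 * R ^ 5 := by gcongr
      _ = R ^ 7 := by ring
  have z3 : b2 ^ 2 * b4 * b5 ≤ p / L + L ^ 19 * R := by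
    refine young (by positivity) hp hR hL 5 1 (by norm_num) (by norm_num) ?_
    calc (b2 ^ 2 * b4 * b5) ^ (5 + 1) = b2 ^ 12 * (b4 ^ 3) ^ 2 * b5 ^ 6 := by ring
      _ ≤ b2 ^ 12 * (b2 * b5 ^ 2) ^ 2 * b5 ^ 6 := by gcongr
      _ = (b5 ^ 2) ^ 5 * (b2 ^ 14) ^ 1 := by ring
      _ ≤ p ^ 5 * R ^ 1 := by gcongr
  refine ⟨?_, ?_, z3, ?_, ?_, ?_, ?_, ?_, ?_, ?_, ?_⟩
  · refine young (by positivity) hp hR hL 4 2 (by norm_num) (by norm_num) ?_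
    calc (a1 ^ 2 * a3 * a4) ^ (4 + 2) = a1 ^ 12 * a3 ^ 3 * a3 ^ 3 * a4 ^ 6 := by ring
      _ ≤ a1 ^ 12 * a3 ^ 3 * (a1 * a4 ^ 2) * a4 ^ 6 := by gcongr
      _ = (a4 ^ 2) ^ 4 * (a1 ^ 13 * a3 ^ 3) := by ring
      _ = (a4 ^ 2) ^ 4 * V ^ 2 := by rw [hV]
      _ ≤ p ^ 4 * R ^ 2 := by gcongr
  · refine young (by positivity) hp hR hL 4 2 (by norm_num) (by norm_num) ?_
    calc (a2 ^ 2 * a2 * a3) ^ (4 + 2) = (a2 ^ 2) ^ 9 * a3 ^ 6 := by ring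
      _ ≤ (a1 * a3) ^ 9 * a3 ^ 6 := by gcongr
      _ = a1 ^ 9 * a3 ^ 3 * (a3 ^ 3) ^ 4 := by ring
      _ ≤ a1 ^ 9 * a3 ^ 3 * (a1 * a4 ^ 2) ^ 4 := by gcongr
      _ = (a4 ^ 2) ^ 4 * (a1 ^ 13 * a3 ^ 3) := by ring
      _ = (a4 ^ 2) ^ 4 * V ^ 2 := by rw [hV]
      _ ≤ p ^ 4 * R ^ 2 := by gcongr
  · refine le_trans ?_ z3
    calc b3 ^ 2 * b3 * b4 = b3 ^ 3 * b4 := by ring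
      _ ≤ (b2 ^ 2 * b5) * b4 := by gcongr
      _ = _ := by ring
  · refine young (by positivity) hp hR hL 2 1 (by norm_num) (by norm_num) ?_
    calc ((b2 * b2 * b4) ^ 2) ^ (2 + 1) = b2 ^ 12 * (b4 ^ 3) ^ 2 := by ring
      _ ≤ b2 ^ 12 * (b2 * b5 ^ 2) ^ 2 := by gcongr
      _ = (b5 ^ 2) ^ 2 * (b2 ^ 14) ^ 1 := by ring
      _ ≤ p ^ 2 * R ^ 1 := by gcongr
  · refine young (by positivity) hp hR hL 2 1 (by norm_num) (by norm_num) ?_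
    calc ((b2 * b3 * b3) ^ 2) ^ (2 + 1) = b2 ^ 6 * (b3 ^ 3) ^ 4 := by ring
      _ ≤ b2 ^ 6 * (b2 ^ 2 * b5) ^ 4 := by gcongr
      _ = (b5 ^ 2) ^ 2 * (b2 ^ 14) ^ 1 := by ring
      _ ≤ p ^ 2 * R ^ 1 := by gcongr
  · refine young (by positivity) hp hR hL 3 1 (by norm_num) (by norm_num) ?_
    calc (b2 ^ 2 * a3 * a4) ^ (3 + 1) = b2 ^ 8 * (a3 ^ 2) ^ 2 * a4 ^ 4 := by ring
      _ ≤ b2 ^ 8 * (a2 * a4) ^ 2 * a4 ^ 4 := by gcongr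
      _ = (a4 ^ 2) ^ 3 * (a2 ^ 2 * b2 ^ 8) ^ 1 := by ring
      _ ≤ p ^ 3 * R ^ 1 := by gcongr
  · refine young (by positivity) hp hR hL 7 5 (by norm_num) (by norm_num) ?_
    calc (b3 ^ 2 * a2 * a3) ^ (7 + 5) = (b3 ^ 3) ^ 8 * a2 ^ 12 * (a3 ^ 2) ^ 6 := by ring
      _ ≤ (b2 ^ 2 * b5) ^ 8 * a2 ^ 12 * (a2 * a4) ^ 6 := by gcongr
      _ = (b5 ^ 2) ^ 4 * (a4 ^ 2) ^ 3 * (a2 ^ 18 * b2 ^ 16) := by ring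
      _ ≤ p ^ 4 * p ^ 3 * R ^ 5 := by gcongr
      _ = p ^ 7 * R ^ 5 := by ring
  · refine young (by positivity) hp hR hL 1 1 (by norm_num) (by norm_num) ?_
    calc (a2 ^ 2 * b3 * b4) ^ (1 + 1) = a2 ^ 4 * (b3 ^ 2) * b4 ^ 2 := by ring
      _ ≤ a2 ^ 4 * (b2 * b4) * b4 ^ 2 := by gcongr
      _ = a2 ^ 4 * b2 * b4 ^ 3 := by ring
      _ ≤ a2 ^ 4 * b2 * (b2 * b5 ^ 2) := by gcongr
      _ = (b5 ^ 2) ^ 1 * (a2 ^ 4 * b2 ^ 2) ^ 1 := by ring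
      _ ≤ p ^ 1 * R ^ 1 := by gcongr
  · refine young (by positivity) hp hR hL 3 1 (by norm_num) (by norm_num) ?_
    calc (b4 * √(a2 ^ 2 * b4 * b5)) ^ (3 + 1) = b4 ^ 4 * (√(a2 ^ 2 * b4 * b5) ^ 2) ^ 2 := by ring
      _ = b4 ^ 4 * (a2 ^ 2 * b4 * b5) ^ 2 := by rw [Real.sq_sqrt (by positivity)]
      _ = a2 ^ 4 * (b4 ^ 3) ^ 2 * b5 ^ 2 := by ring
      _ ≤ a2 ^ 4 * (b2 * b5 ^ 2) ^ 2 * b5 ^ 2 := by gcongr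
      _ = (b5 ^ 2) ^ 3 * (a2 ^ 4 * b2 ^ 2) ^ 1 := by ring
      _ ≤ p ^ 3 * R ^ 1 := by gcongr
  · refine young (by positivity) hp hR hL 19 5 (by norm_num) (by norm_num) ?_
    calc (b4 * √(b4 ^ 2 * a2 * a3)) ^ (19 + 5) = b4 ^ 24 * (√(b4 ^ 2 * a2 * a3) ^ 2) ^ 12 := by ring
      _ = b4 ^ 24 * (b4 ^ 2 * a2 * a3) ^ 12 := by rw [Real.sq_sqrt (by positivity)]
      _ = (b4 ^ 3) ^ 16 * a2 ^ 12 * (a3 ^ 2) ^ 6 := by ring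
      _ ≤ (b2 * b5 ^ 2) ^ 16 * a2 ^ 12 * (a2 * a4) ^ 6 := by gcongr
      _ = (b5 ^ 2) ^ 16 * (a4 ^ 2) ^ 3 * (a2 ^ 18 * b2 ^ 16) := by ring
      _ ≤ p ^ 16 * p ^ 3 * R ^ 5 := by gcongr
      _ = p ^ 19 * R ^ 5 := by ring

lemma term_le {y s p K z L c R : ℝ} (hyp : y ^ 2 ≤ p) (hc : 0 < c) (hK : 0 < K)
    (hs : s ^ 2 ≤ K * z) (hL : L = 2500 * c ^ 2 * K) (hz : z ≤ p / L + L ^ 19 * R) :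
    c * (y * s) ≤ p / 50 + 25 * c ^ 2 * K * L ^ 19 * R := by
  have h1 : c * (y * s) ≤ y ^ 2 / 100 + 25 * c ^ 2 * s ^ 2 := by
    nlinarith [sq_nonneg (y / 10 - 5 * c * s)]
  have h2 : 25 * c ^ 2 * s ^ 2 ≤ 25 * c ^ 2 * (K * (p / L + L ^ 19 * R)) := by
    have : K * z ≤ K * (p / L + L ^ 19 * R) := by gcongr
    gcongr
    exact hs.trans this
  have h3 : 25 * c ^ 2 * K * (p / L) = p / 100 := by rw [hL]; field_simp; ring
  nlinarith

lemma term_le2 {y w p K Kt L c R : ℝ} (hp0 : 0 ≤ p) (hy : 0 ≤ y) (hK : 1 ≤ K) (hK1 : K ≤ Kt)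
    (hc : 1 ≤ c) (hL : L = 2500 * c ^ 2 * Kt) (h : y * √w ≤ p / L + L ^ 19 * R) :
    c * (y * √(K * w)) ≤ p / 50 + 25 * c ^ 2 * Kt * L ^ 19 * R := by
  have hKt : 0 < Kt := by linarith
  have hc0 : 0 < c := by linarith
  have e1 : √(K * w) ≤ Kt * √w := by
    rw [Real.sqrt_mul (by linarith)]
    gcongr
    refine le_trans ?_ hK1
    exact Real.sqrt_le_iff.2 ⟨by linarith, le_self_pow₀ hK (by norm_num)⟩
  have e3 : 25 * c ^ 2 * Kt * (p / L) = p / 100 := by rw [hL]; field_simp; ring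
  calc c * (y * √(K * w)) ≤ c * (y * (Kt * √w)) := by gcongr
    _ = c * Kt * (y * √w) := by ring
    _ ≤ 25 * c ^ 2 * Kt * (y * √w) := by
        have : c ≤ 25 * c ^ 2 := by nlinarith
        gcongr
    _ ≤ 25 * c ^ 2 * Kt * (p / L + L ^ 19 * R) := by gcongr
    _ = p / 100 + 25 * c ^ 2 * Kt * L ^ 19 * R := by rw [mul_add, e3]; ring
    _ ≤ _ := by gcongr; norm_num

lemma final_real (K K' : ℝ) (hK : 1 ≤ K) (hK' : 1 ≤ K') : ∃ C : ℝ, 0 ≤ C ∧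
    ∀ a1 a2 a3 a4 b2 b3 b4 b5 R V T : ℝ, 0 ≤ a1 → 0 ≤ a2 → 0 ≤ a3 →
    0 ≤ a4 → 0 ≤ b2 → 0 ≤ b3 → 0 ≤ b4 → 0 ≤ b5 →
    a2 ^ 2 ≤ a1 * a3 → a3 ^ 2 ≤ a2 * a4 → b3 ^ 2 ≤ b2 * b4 → b4 ^ 2 ≤ b3 * b5 →
    0 ≤ V → 0 ≤ T → V ^ 2 = a1 ^ 13 * a3 ^ 3 → T ^ 5 = b2 ^ 14 →
    V ≤ R → T ≤ R → a2 ^ 14 ≤ R → b2 ^ 14 ≤ R →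
    3000 * (a4 * (√(K * (a1 ^ 2 * a3 * a4)) + √(K * (a2 ^ 2 * a2 * a3)) +
      √(K * (b2 ^ 2 * b4 * b5)) + √(K * (b3 ^ 2 * b3 * b4))) +
      b5 * (√(K * (b2 ^ 2 * b4 * b5)) + √(K * (b3 ^ 2 * b3 * b4)) + K' * (b2 * b2 * b4) +
        K' * (b2 * b3 * b3) + √(K * (b2 ^ 2 * a3 * a4)) + √(K * (b3 ^ 2 * a2 * a3)) +
        √(K * (a2 ^ 2 * b3 * b4))) +
      b4 * (√(K * (a2 ^ 2 * b4 * b5)) + √(K * (b4 ^ 2 * a2 * a3)))) ≤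
      (a4 ^ 2 + b5 ^ 2) / 2 + C * R := by
  set c : ℝ := 3000 with hc
  set Kt : ℝ := K + K' ^ 2 with hKt
  set L : ℝ := 2500 * c ^ 2 * Kt with hL
  have hK1 : K ≤ Kt := by rw [hKt]; nlinarith
  have hK2 : K' ^ 2 ≤ Kt := by rw [hKt]; linarith
  have hKt1 : 1 ≤ Kt := by linarith
  have hL1 : 1 ≤ L := by rw [hL, hc]; linarith
  refine ⟨13 * (25 * c ^ 2 * Kt * L ^ 19), by positivity, ?_⟩
  intro a1 a2 a3 a4 b2 b3 b4 b5 R V T ha1 ha2 ha3 ha4 hb2 hb3 hb4 hb5 l1 l2 l3 l4 hV0 hT0 hV hT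
    hVR hTR haR hbR
  set p := a4 ^ 2 + b5 ^ 2 with hp
  have hpa : a4 ^ 2 ≤ p := by rw [hp]; nlinarith
  have hpb : b5 ^ 2 ≤ p := by rw [hp]; nlinarith
  obtain ⟨z1, z2, z3, z4, z5, z6, z7, z8, z9, z10, z11⟩ := mono_bounds ha1 ha2 ha3 ha4 hb2 hb3 hb4
    hb5 l1 l2 l3 l4 hpa hpb hV0 hT0 hV hT hVR hTR haR hbR hL1 rfl
  have hsq : ∀ w, 0 ≤ w → √(K * w) ^ 2 ≤ Kt * w := by
    intro w hw
    rw [Real.sq_sqrt (by positivity)]; gcongr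
  have hsq' : ∀ w, (K' * w) ^ 2 ≤ Kt * w ^ 2 := by
    intro w
    rw [mul_pow]; gcongr
  have hKt0 : 0 < Kt := by linarith
  have hc0 : 0 < c := by rw [hc]; norm_num
  have tm : ∀ y s z, y ^ 2 ≤ p → s ^ 2 ≤ Kt * z → z ≤ p / L + L ^ 19 * R →
      c * (y * s) ≤ p / 50 + 25 * c ^ 2 * Kt * L ^ 19 * R :=
    fun y s z h1 h2 h3 => term_le h1 hc0 hKt0 h2 hL h3
  have tm2 : ∀ w, 0 ≤ w → b4 * √w ≤ p / L + L ^ 19 * R →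
      c * (b4 * √(K * w)) ≤ p / 50 + 25 * c ^ 2 * Kt * L ^ 19 * R :=
     fun w hw h => term_le2 ((sq_nonneg _).trans hpa) hb4 hK hK1 (by rw [hc]; norm_num) hL h
  have t1 := tm _ _ _ hpa (hsq (a1 ^ 2 * a3 * a4) (by positivity)) z1
  have t2 := tm _ _ _ hpa (hsq (a2 ^ 2 * a2 * a3) (by positivity)) z2
  have t3 := tm _ _ _ hpa (hsq (b2 ^ 2 * b4 * b5) (by positivity)) z3
  have t4 := tm _ _ _ hpa (hsq (b3 ^ 2 * b3 * b4) (by positivity)) z4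
  have t3' := tm _ _ _ hpb (hsq (b2 ^ 2 * b4 * b5) (by positivity)) z3
  have t4' := tm _ _ _ hpb (hsq (b3 ^ 2 * b3 * b4) (by positivity)) z4
  have t5 := tm _ _ _ hpb (hsq' (b2 * b2 * b4)) z5
  have t6 := tm _ _ _ hpb (hsq' (b2 * b3 * b3)) z6
  have t7 := tm _ _ _ hpb (hsq (b2 ^ 2 * a3 * a4) (by positivity)) z7
  have t8 := tm _ _ _ hpb (hsq (b3 ^ 2 * a2 * a3) (by positivity)) z8
  have t9 := tm _ _ _ hpb (hsq (a2 ^ 2 * b3 * b4) (by positivity)) z9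
  have t10 := tm2 (a2 ^ 2 * b4 * b5) (by positivity) z10
  have t11 := tm2 (b4 ^ 2 * a2 * a3) (by positivity) z11
  have hp0 : 0 ≤ p := (sq_nonneg _).trans hpa
  generalize 25 * c ^ 2 * Kt * L ^ 19 = Q at *
  simp only [mul_add] at *
  linarith

lemma static : ∃ C : ℝ, 0 < C ∧ ∀ (v e : Fin 3 → E3 → ℝ) (p : E3 → ℝ), St v e → Sm p →
    (∀ j, Sch (pd j p)) →
    2 * (∑ j, ∑ i, I (pd i (lap (v j)) * pd i (lap (VT v e p j)))) +
      2 * (∑ k, I (lap (lap (e k)) * lap (lap (ET v e k)))) +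
      (1 / 4 : ℝ) * (NN (la (la v)) ^ 2 + NN (gr (la (la e))) ^ 2) ≤
    C * (NN (gr v) ^ ((13 : ℝ)/2) * NN (gr (la v)) ^ ((3 : ℝ)/2)
                + NN (la e) ^ (14 : ℕ)
                + NN (la e) ^ ((38 : ℝ)/7)
                + NN (la e) ^ ((14 : ℝ)/5)
                + NN (la v) ^ (14 : ℕ)) := by
  obtain ⟨K, hK, K', hK', hsb⟩ := sb_exists
  obtain ⟨C, hC, hfin⟩ := final_real K K' hK hK'
  refine ⟨2 * C + 1, by linarith, ?_⟩
  intro v e p st hp hp'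
  have sb := hsb v e st _ _ _ _ _ _ _ _ rfl rfl rfl rfl rfl rfl rfl rfl
  have cu := core_u st sb hp hp' (a4 := NN (la (la v))) (fun j => n2_la (la v) j)
  have cd := Finset.sum_le_sum fun k (_ : k ∈ (Finset.univ : Finset (Fin 3))) =>
    core_d st sb (b4 := NN (la (la e))) (b5 := NN (gr (la (la e)))) (fun k => n2_la (la e) k)
      (fun i k => n2_gr (la (la e)) i k) k
  have l1 := lc1 st.gv
  have l2 : NN (gr (la v)) ^ 2 ≤ NN (la v) * NN (la (la v)) := lc2 (fun k => (st.gv k).lap)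
  have l3 : NN (gr (la e)) ^ 2 ≤ NN (la e) * NN (la (la e)) := lc2 (fun k => (st.ge k).lap)
  have l4 : NN (la (la e)) ^ 2 ≤ NN (gr (la e)) * NN (gr (la (la e))) :=
    lc1 (fun k => (st.ge k).lap.gs)
  have eu : ∑ j, I (lap (lap (v j)) * lap (lap (v j))) = NN (la (la v)) ^ 2 := by
    rw [NN_sq]; rfl
  have ee : ∑ k, ∑ i, I (pd i (lap (lap (e k))) * pd i (lap (lap (e k)))) =
      NN (gr (la (la e))) ^ 2 := by
    rw [NN_sq, Fintype.sum_prod_type_right]; rfl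
  rw [eu] at cu
  simp only [Finset.sum_add_distrib, Finset.sum_neg_distrib, ee, Finset.sum_const,
    Finset.card_univ, Fintype.card_fin, nsmul_eq_mul, Nat.cast_ofNat] at cd
  have n1 := NN_nonneg (gr v)
  have n2' := NN_nonneg (la v)
  have n3 := NN_nonneg (gr (la v))
  have n4 := NN_nonneg (la (la v))
  have m2 := NN_nonneg (la e)
  have m3 := NN_nonneg (gr (la e))
  have m4 := NN_nonneg (la (la e))
  have m5 := NN_nonneg (gr (la (la e)))
  have nV : 0 ≤ NN (gr v) ^ ((13 : ℝ)/2) * NN (gr (la v)) ^ ((3 : ℝ)/2) := by positivity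
  have nT : 0 ≤ NN (la e) ^ ((14 : ℝ)/5) := by positivity
  have nU : 0 ≤ NN (la e) ^ ((38 : ℝ)/7) := by positivity
  have nA : 0 ≤ NN (la v) ^ (14 : ℕ) := by positivity
  have nB : 0 ≤ NN (la e) ^ (14 : ℕ) := by positivity
  have eV : (NN (gr v) ^ ((13 : ℝ)/2) * NN (gr (la v)) ^ ((3 : ℝ)/2)) ^ 2 =
      NN (gr v) ^ 13 * NN (gr (la v)) ^ 3 := by
    rw [mul_pow, ← Real.rpow_mul_natCast n1, ← Real.rpow_mul_natCast n3]
    norm_num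
  have eT : (NN (la e) ^ ((14 : ℝ)/5)) ^ 5 = NN (la e) ^ 14 := by
    rw [← Real.rpow_mul_natCast m2]
    norm_num
  have fin := hfin _ _ _ _ _ _ _ _ (NN (gr v) ^ ((13 : ℝ)/2) * NN (gr (la v)) ^ ((3 : ℝ)/2)
                + NN (la e) ^ (14 : ℕ)
                + NN (la e) ^ ((38 : ℝ)/7)
                + NN (la e) ^ ((14 : ℝ)/5)
                + NN (la v) ^ (14 : ℕ)) _ _ n1 n2' n3 n4 m2 m3 m4 m5 l1 l2 l3 l4 nV nT eV eT
                (by linarith) (by linarith) (by linarith) (by linarith)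
  clear l1 l2 l3 l4 eV eT eu ee hfin hsb
  have q1 := (sb.h1 0 0 0 0 0).nonneg
  have q2 := (sb.h2 0 0 0 0 0).nonneg
  have q3 := (sb.h3 0 0 0 0 0 0 0).nonneg
  have q4 := (sb.h4 0 0 0 0 0 0 0).nonneg
  have q5 := (sb.h5 0 0 0 0 0 0 0 0).nonneg
  have q6 := (sb.h6 0 0 0 0 0 0 0 0).nonneg
  have q7 := (sb.h7 0 0 0 0 0 0).nonneg
  have q8 := (sb.h8 0 0 0 0 0 0).nonneg
  have q9 := (sb.h9 0 0 0 0 0 0).nonneg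
  have q10 := (sb.h10 0 0 0 0 0 0 0).nonneg
  have q11 := (sb.h11 0 0 0 0 0 0 0).nonneg
  clear sb
  generalize √(K * (NN (gr v) ^ 2 * NN (gr (la v)) * NN (la (la v)))) = s1 at *
  generalize √(K * (NN (la v) ^ 2 * NN (la v) * NN (gr (la v)))) = s2 at *
  generalize √(K * (NN (la e) ^ 2 * NN (la (la e)) * NN (gr (la (la e))))) = s3 at *
  generalize √(K * (NN (gr (la e)) ^ 2 * NN (gr (la e)) * NN (la (la e)))) = s4 at *
  generalize K' * (NN (la e) * NN (la e) * NN (la (la e))) = s5 at *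
  generalize K' * (NN (la e) * NN (gr (la e)) * NN (gr (la e))) = s6 at *
  generalize √(K * (NN (la e) ^ 2 * NN (gr (la v)) * NN (la (la v)))) = s7 at *
  generalize √(K * (NN (gr (la e)) ^ 2 * NN (la v) * NN (gr (la v)))) = s8 at *
  generalize √(K * (NN (la v) ^ 2 * NN (gr (la e)) * NN (la (la e)))) = s9 at *
  generalize √(K * (NN (la v) ^ 2 * NN (la (la e)) * NN (gr (la (la e))))) = s10 at *
  generalize √(K * (NN (la (la e)) ^ 2 * NN (la v) * NN (gr (la v)))) = s11 at *
  generalize hR : (NN (gr v) ^ ((13 : ℝ)/2) * NN (gr (la v)) ^ ((3 : ℝ)/2)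
                + NN (la e) ^ (14 : ℕ)
                + NN (la e) ^ ((38 : ℝ)/7)
                + NN (la e) ^ ((14 : ℝ)/5)
                + NN (la v) ^ (14 : ℕ)) = R at *
  have hR0 : 0 ≤ R := by rw [← hR]; linarith
  clear nV nT nU nA nB hR n1 n2' n3 m2 m3
  generalize NN (la (la v)) = a4 at *
  generalize NN (la (la e)) = b4 at *
  generalize NN (gr (la (la e))) = b5 at *
  have r1 := mul_nonneg n4 q1
  have r2 := mul_nonneg n4 q2
  have r3 := mul_nonneg n4 q3
  have r4 := mul_nonneg n4 q4
  have t3 := mul_nonneg m5 q3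
  have t4 := mul_nonneg m5 q4
  have t5 := mul_nonneg m5 q5
  have t6 := mul_nonneg m5 q6
  have t7 := mul_nonneg m5 q7
  have t8 := mul_nonneg m5 q8
  have t9 := mul_nonneg m5 q9
  have t10 := mul_nonneg m4 q10
  have t11 := mul_nonneg m4 q11
  have y1 := sq_nonneg a4
  have y2 := sq_nonneg b5
  linarith

section PartT

/-- jointly smooth -/
def JS (f : ℝ → E3 → ℝ) : Prop := ContDiff ℝ (⊤ : ℕ∞) (Function.uncurry f)
/-- time derivative -/
def dt (f : ℝ → E3 → ℝ) : ℝ → E3 → ℝ := fun t x => deriv (fun s => f s x) t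
/-- space derivative -/
def PD (i : Fin 3) (f : ℝ → E3 → ℝ) : ℝ → E3 → ℝ := fun t => pd i (f t)
/-- Laplacian of a family -/
def LAP (f : ℝ → E3 → ℝ) : ℝ → E3 → ℝ := fun t => lap (f t)

lemma dir_smooth {F : ℝ × E3 → ℝ} (hF : ContDiff ℝ (⊤ : ℕ∞) F) (w : ℝ × E3) :
    ContDiff ℝ (⊤ : ℕ∞) (fun q => fderiv ℝ F q w) := by
  have h : ContDiff ℝ (⊤ : ℕ∞) (fderiv ℝ F) := ContDiff.fderiv_right hF (by simp)
  exact h.clm_apply contDiff_const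

lemma dir_comm {F : ℝ × E3 → ℝ} (hF : ContDiff ℝ (⊤ : ℕ∞) F) (w w' q : ℝ × E3) :
    fderiv ℝ (fun q => fderiv ℝ F q w) q w' = fderiv ℝ (fun q => fderiv ℝ F q w') q w := by
  have key : ∀ w w', fderiv ℝ (fun q => fderiv ℝ F q w) q w' =
      fderiv ℝ (fderiv ℝ F) q w' w := by
    intro w w'
    have h : DifferentiableAt ℝ (fderiv ℝ F) q :=
      (ContDiff.differentiable (n := (⊤ : ℕ∞)) (ContDiff.fderiv_right hF (by simp)) (by simp)) q
    rw [fderiv_clm_apply h (by fun_prop)]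
    simp
  rw [key, key]
  have hs : IsSymmSndFDerivAt ℝ F q := (ContDiff.contDiffAt hF).isSymmSndFDerivAt (by
    simp only [minSmoothness_of_isRCLikeNormedField]; exact ENat.LEInfty.out)
  exact hs _ _

lemma JS.diff {f : ℝ → E3 → ℝ} (hf : JS f) : Differentiable ℝ (Function.uncurry f) :=
  ContDiff.differentiable hf (by simp)

lemma JS.hasDerivAt {f : ℝ → E3 → ℝ} (hf : JS f) (t : ℝ) (x : E3) :
    HasDerivAt (fun s => f s x) (fderiv ℝ (Function.uncurry f) (t, x) (1, 0)) t := by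
  have h1 : HasDerivAt (fun s : ℝ => (s, x)) ((1, 0) : ℝ × E3) t :=
    (hasDerivAt_id t).prodMk (hasDerivAt_const t x)
  exact (hf.diff (t, x)).hasFDerivAt.comp_hasDerivAt t h1

lemma dt_eq {f : ℝ → E3 → ℝ} (hf : JS f) :
    dt f = fun t x => fderiv ℝ (Function.uncurry f) (t, x) (1, 0) := by
  ext t x
  exact (hf.hasDerivAt t x).deriv

lemma JS.hasDerivAt' {f : ℝ → E3 → ℝ} (hf : JS f) (t : ℝ) (x : E3) :
    HasDerivAt (fun s => f s x) (dt f t x) t := by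
  rw [dt_eq hf]; exact hf.hasDerivAt t x

lemma PD_eq {f : ℝ → E3 → ℝ} (hf : JS f) (i : Fin 3) :
    PD i f = fun t x => fderiv ℝ (Function.uncurry f) (t, x) (0, EuclideanSpace.single i 1) := by
  ext t x
  have h1 : HasFDerivAt (fun y : E3 => (t, y)) (ContinuousLinearMap.inr ℝ ℝ E3) x :=
    hasFDerivAt_prodMk_right t x
  have h2 := (hf.diff (t, x)).hasFDerivAt.comp x h1
  have h3 : fderiv ℝ (f t) x = _ := h2.fderiv
  simp [PD, pd, h3]

lemma JS.dt {f : ℝ → E3 → ℝ} (hf : JS f) : JS (dt f) := by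
  rw [dt_eq hf]; exact dir_smooth hf (1, 0)
lemma JS.PD {f : ℝ → E3 → ℝ} (hf : JS f) (i : Fin 3) : JS (PD i f) := by
  rw [PD_eq hf]; exact dir_smooth hf (0, EuclideanSpace.single i 1)

lemma dt_PD {f : ℝ → E3 → ℝ} (hf : JS f) (i : Fin 3) : dt (PD i f) = PD i (dt f) := by
  rw [dt_eq (hf.PD i), PD_eq hf.dt, PD_eq hf, dt_eq hf]
  ext t x
  exact dir_comm hf (0, EuclideanSpace.single i 1) (1, 0) (t, x)

lemma JS.sum {f : Fin 3 → ℝ → E3 → ℝ} (hf : ∀ i, JS (f i)) : JS (∑ i, f i) := by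
  have : Function.uncurry (∑ i, f i) = fun q => ∑ i, Function.uncurry (f i) q := by
    ext ⟨t, x⟩; simp [Function.uncurry]
  unfold JS
  rw [this]
  exact ContDiff.sum fun i _ => hf i

lemma dt_sum {f : Fin 3 → ℝ → E3 → ℝ} (hf : ∀ i, JS (f i)) : dt (∑ i, f i) = ∑ i, dt (f i) := by
  ext t x
  have := HasDerivAt.fun_sum (u := Finset.univ) fun i _ => (hf i).hasDerivAt' t x
  have h2 := this.deriv
  simp only [Finset.sum_apply] at h2 ⊢
  rw [← h2]
  simp [dt]

lemma LAP_eq (f : ℝ → E3 → ℝ) : LAP f = ∑ i, PD i (PD i f) := by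
  ext t x; simp [LAP, PD, lap]

lemma JS.LAP {f : ℝ → E3 → ℝ} (hf : JS f) : JS (LAP f) := by
  rw [LAP_eq]; exact JS.sum fun i => (hf.PD i).PD i

lemma dt_LAP {f : ℝ → E3 → ℝ} (hf : JS f) : dt (LAP f) = LAP (dt f) := by
  rw [LAP_eq, LAP_eq, dt_sum (fun i => (hf.PD i).PD i)]
  exact Finset.sum_congr rfl fun i _ => by rw [dt_PD (hf.PD i), dt_PD hf]

lemma JS.slice {f : ℝ → E3 → ℝ} (hf : JS f) (t : ℝ) : Sm (f t) := by
  have : f t = Function.uncurry f ∘ fun y => (t, y) := rfl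
  unfold Sm
  rw [this]
  exact ContDiff.comp hf (contDiff_const.prodMk contDiff_id)

variable {T : ℝ}

lemma SF_PD {f : ℝ → E3 → ℝ} (hf : JS f) (h : SchwartzFamily T f) (i : Fin 3) :
    SchwartzFamily T (PD i f) := by
  intro t₀ ht₀ k l
  obtain ⟨ε, hε, C, hC⟩ := h t₀ ht₀ k (l + 1)
  refine ⟨ε, hε, C, fun t ht htt x => le_trans ?_ (hC t ht htt x)⟩
  refine mul_le_mul_of_nonneg_left ?_ (by positivity)
  have hd : ContDiff ℝ (⊤ : ℕ∞) (fderiv ℝ (f t)) := ContDiff.fderiv_right (hf.slice t) (by simp)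
  have := norm_iteratedFDeriv_clm_apply_const (𝕜 := ℝ) (c := (EuclideanSpace.single i 1 : E3))
    (f := fderiv ℝ (f t)) (x := x) (N := (⊤ : ℕ∞)) (n := l) hd.contDiffAt (by exact_mod_cast le_top)
  rw [norm_iteratedFDeriv_fderiv] at this
  simp only [EuclideanSpace.norm_single, norm_one, one_mul] at this
  exact this

lemma SF_add {f g : ℝ → E3 → ℝ} (hf : JS f) (hg : JS g) (h : SchwartzFamily T f)
    (h' : SchwartzFamily T g) : SchwartzFamily T (f + g) := by
  intro t₀ ht₀ k l
  obtain ⟨ε, hε, C, hC⟩ := h t₀ ht₀ k l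
  obtain ⟨ε', hε', C', hC'⟩ := h' t₀ ht₀ k l
  refine ⟨min ε ε', lt_min hε hε', C + C', fun t ht htt x => ?_⟩
  have h1 := hC t ht (htt.trans_le (min_le_left _ _)) x
  have h2 := hC' t ht (htt.trans_le (min_le_right _ _)) x
  have e : iteratedFDeriv ℝ l ((f + g) t) x =
      iteratedFDeriv ℝ l (f t) x + iteratedFDeriv ℝ l (g t) x :=
    iteratedFDeriv_add_apply ((ContDiff.of_le (hf.slice t) (by exact_mod_cast le_top)).contDiffAt)
      ((ContDiff.of_le (hg.slice t) (by exact_mod_cast le_top)).contDiffAt)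
  rw [e]
  calc _ ≤ ‖x‖ ^ k * (‖iteratedFDeriv ℝ l (f t) x‖ + ‖iteratedFDeriv ℝ l (g t) x‖) := by
        gcongr; exact norm_add_le _ _
    _ ≤ _ := by rw [mul_add]; exact add_le_add h1 h2

lemma SF_sum {f : Fin 3 → ℝ → E3 → ℝ} (hf : ∀ i, JS (f i)) (h : ∀ i, SchwartzFamily T (f i)) :
    SchwartzFamily T (∑ i, f i) := by
  rw [Fin.sum_univ_three]
  have h01 : JS (f 0 + f 1) := ContDiff.add (hf 0) (hf 1)
  exact SF_add h01 (hf 2) (SF_add (hf 0) (hf 1) (h 0) (h 1)) (h 2)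

lemma SF_LAP {f : ℝ → E3 → ℝ} (hf : JS f) (h : SchwartzFamily T f) :
    SchwartzFamily T (LAP f) := by
  rw [LAP_eq]
  exact SF_sum (fun i => (hf.PD i).PD i) fun i => SF_PD (hf.PD i) (SF_PD hf h i) i

lemma SF_slice {f : ℝ → E3 → ℝ} (hf : JS f) (h : SchwartzFamily T f) {t : ℝ}
    (ht : t ∈ Set.Ioo 0 T) : Sch (f t) := by
  refine ⟨⟨f t, hf.slice t, fun k l => ?_⟩, rfl⟩
  obtain ⟨ε, hε, C, hC⟩ := h t ht k l
  exact ⟨C, fun x => hC t ht (by simpa using hε) x⟩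

lemma hasDeriv_sq {f : ℝ → E3 → ℝ} (hf : JS f) (h : SchwartzFamily T f)
    (h' : SchwartzFamily T (dt f)) {t : ℝ} (ht : t ∈ Set.Ioo 0 T) :
    HasDerivAt (fun s => I (f s * f s)) (2 * I (f t * dt f t)) t := by
  obtain ⟨ε0, hε0, C0, hC0⟩ := h t ht 0 0
  obtain ⟨ε1, hε1, C1, hC1⟩ := h' t ht 0 0
  obtain ⟨ε2, hε2, C2, hC2⟩ := h' t ht 4 0
  set ε := min (min ε0 ε1) (min ε2 (min t (T - t))) with hε
  have hεpos : 0 < ε := by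
    have h1 := ht.1
    have h2 := ht.2
    have h3 : 0 < T - t := by linarith
    simp only [hε, lt_min_iff]
    exact ⟨⟨hε0, hε1⟩, hε2, h1, h3⟩
  have hball : ∀ s ∈ Metric.ball t ε, s ∈ Set.Ioo 0 T ∧ |s - t| < ε0 ∧ |s - t| < ε1 ∧
      |s - t| < ε2 := by
    intro s hs
    rw [Metric.mem_ball, Real.dist_eq] at hs
    simp only [hε, lt_min_iff] at hs
    obtain ⟨⟨h0, h1⟩, h2, h3, h4⟩ := hs
    refine ⟨⟨?_, ?_⟩, h0, h1, h2⟩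
    · have := (abs_lt.1 h3).1; linarith
    · have := (abs_lt.1 h4).2; linarith
  have key := hasDerivAt_integral_of_dominated_loc_of_deriv_le (μ := (volume : Measure E3))
    (F := fun s x => f s x * f s x) (F' := fun s x => dt f s x * f s x + f s x * dt f s x)
    (x₀ := t) (s := Metric.ball t ε)
    (bound := fun x => (2 * C0 * (8 * (C1 + C2))) * (1 + ‖x‖) ^ (-(4:ℝ)))
    (Metric.ball_mem_nhds t hεpos) ?_ ?_ ?_ ?_ ?_ ?_
  · have h2 := key.2
    have h3 : HasDerivAt (fun s => I (f s * f s)) _ t := h2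
    refine h3.congr_deriv ?_
    rw [← I_two]
    unfold I
    refine integral_congr_ae (Filter.Eventually.of_forall fun x => ?_)
    simp only [Pi.mul_apply, Pi.ofNat_apply]
    ring
  · refine Filter.Eventually.of_forall fun s => ?_
    have := (hf.slice s).diff.continuous
    exact (this.mul this).aestronglyMeasurable
  · have := SF_slice hf h ht
    exact (this.mul this).integrable
  · have h1 := (hf.slice t).diff.continuous
    have h2 := (hf.dt.slice t).diff.continuous
    exact ((h2.mul h1).add (h1.mul h2)).aestronglyMeasurable
  · refine Filter.Eventually.of_forall fun x s hs => ?_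
    obtain ⟨hsT, h0, h1, h2⟩ := hball s hs
    have b0 := hC0 s hsT h0 x
    have b1 := hC1 s hsT h1 x
    have b2 := hC2 s hsT h2 x
    simp only [pow_zero, one_mul, norm_iteratedFDeriv_zero] at b0 b1 b2
    have hx : 0 ≤ ‖x‖ := norm_nonneg x
    have hC0' : 0 ≤ C0 := (norm_nonneg _).trans b0
    have e1 : ‖dt f s x‖ ≤ (8 * (C1 + C2)) * (1 + ‖x‖) ^ (-(4:ℝ)) := by
      have e2 : (1 + ‖x‖) ^ 4 ≤ 8 * (1 + ‖x‖ ^ 4) := by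
        have := add_pow_le zero_le_one hx 4
        norm_num at this
        exact this
      have e3 : (1 + ‖x‖) ^ (-(4:ℝ)) = ((1 + ‖x‖) ^ 4)⁻¹ := by
        rw [Real.rpow_neg (by positivity)]; norm_cast
      rw [e3, ← div_eq_mul_inv, le_div_iff₀ (by positivity)]
      calc ‖dt f s x‖ * (1 + ‖x‖) ^ 4 ≤ ‖dt f s x‖ * (8 * (1 + ‖x‖ ^ 4)) := by gcongr
        _ = 8 * (‖dt f s x‖ + ‖x‖ ^ 4 * ‖dt f s x‖) := by ring
        _ ≤ _ := by gcongr
    calc ‖dt f s x * f s x + f s x * dt f s x‖ = 2 * ‖f s x‖ * ‖dt f s x‖ := by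
          rw [show dt f s x * f s x + f s x * dt f s x = 2 * (f s x * dt f s x) by ring,
            norm_mul, norm_mul]
          simp; ring
      _ ≤ 2 * C0 * ((8 * (C1 + C2)) * (1 + ‖x‖) ^ (-(4:ℝ))) := by gcongr
      _ = _ := by ring
  · refine Integrable.const_mul ?_ _
    exact integrable_one_add_norm (by simp; norm_num)
  · refine Filter.Eventually.of_forall fun x s _ => ?_
    exact (hf.hasDerivAt' s x).mul (hf.hasDerivAt' s x)

end PartT

theorem statement15 :
    ∃ C : ℝ, 0 < C ∧
      ∀ (T : ℝ) (u : ℝ → EuclideanSpace ℝ (Fin 3) → EuclideanSpace ℝ (Fin 3))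
        (P : ℝ → EuclideanSpace ℝ (Fin 3) → ℝ)
        (d : ℝ → EuclideanSpace ℝ (Fin 3) → EuclideanSpace ℝ (Fin 3)),
        IsNLC 3 T u P d → SchwartzDecay 3 T u d →
        ∀ t ∈ Set.Ioo (0:ℝ) T, ∃ D : ℝ,
          HasDerivAt (fun s => gradLapL2u (u s) ^ 2 + bilapL2 (d s) ^ 2) D t ∧
          D + (1/4 : ℝ) * (bilapL2u (u t) ^ 2 + gradBilapL2 (d t) ^ 2)
            ≤ C * (vortL2 (u t) ^ ((13 : ℝ)/2) * gradLapL2u (u t) ^ ((3 : ℝ)/2)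
                + lapL2 (d t) ^ (14 : ℕ)
                + lapL2 (d t) ^ ((38 : ℝ)/7)
                + lapL2 (d t) ^ ((14 : ℝ)/5)
                + gradVortL2 (u t) ^ (14 : ℕ)) := by
  obtain ⟨C, hC, hst⟩ := static
  refine ⟨C, hC, ?_⟩
  intro T u P d hN hS t ht
  obtain ⟨S1, S2, S3, S4⟩ := hS
  -- component families
  let U : Fin 3 → ℝ → E3 → ℝ := fun j s x => u s x j
  let Dd : Fin 3 → ℝ → E3 → ℝ := fun k s x => d s x k
  have jU : ∀ j, JS (U j) := fun j => by
    have h := (EuclideanSpace.proj j : E3 →L[ℝ] ℝ).contDiff (n := (⊤ : ℕ∞)) |>.comp hN.smooth_u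
    exact h
  have jD : ∀ k, JS (Dd k) := fun k => by
    have h := (EuclideanSpace.proj k : E3 →L[ℝ] ℝ).contDiff (n := (⊤ : ℕ∞)) |>.comp hN.smooth_d
    exact h
  have sU : ∀ j, SchwartzFamily T (U j) := S1
  have sdU : ∀ j, SchwartzFamily T (dt (U j)) := S2
  have sD : ∀ i k, SchwartzFamily T (PD i (Dd k)) := S3
  have sdD : ∀ i k, SchwartzFamily T (dt (PD i (Dd k))) := S4
  -- bilaplacian of the director
  have LL : ∀ f : ℝ → E3 → ℝ, JS f → LAP (LAP f) = ∑ i, PD i (LAP (PD i f)) := by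
    intro f hf
    rw [LAP_eq (LAP f)]
    refine Finset.sum_congr rfl fun i _ => ?_
    ext s x
    simp only [PD, LAP, lap_pd (hf.slice s)]
  let v : Fin 3 → E3 → ℝ := fun j => U j t
  let e : Fin 3 → E3 → ℝ := fun k => Dd k t
  have st : St v e := by
    refine ⟨fun j => SF_slice (jU j) (sU j) ht, fun k => (jD k).slice t,
      fun i k => SF_slice ((jD k).PD i) (sD i k) ht, fun k x => ?_, ?_⟩
    · have h1 := PiLp.norm_apply_le (d t x) k
      rw [hN.unit t ht x] at h1
      exact h1
    · ext x
      simpa using hN.divfree t ht x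
  have hp : Sm (P t) := JS.slice (f := P) hN.smooth_P t
  have hVTeq : ∀ j, dt (U j) t = VT v e (P t) j := by
    intro j
    ext x
    have h1 := hN.momentum t ht x j
    have e1 : (fun y => ∑ k : Fin 3, pd j (e k) y) = ∑ k : Fin 3, pd j (e k) := by
      ext y; simp
    have e2 : ∀ i, (fun y => ∑ k : Fin 3, pd i (fun z => d t z k) y * pd j (fun z => d t z k) y) =
        ∑ k, pd i (e k) * pd j (e k) := by
      intro i; ext y; simp [e, Dd]
    simp only [e2] at h1
    simp only [VT, Pi.sub_apply, Finset.sum_apply, Pi.mul_apply]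
    change dt (U j) t x - lap (v j) x + (∑ i, v i x * pd i (v j) x) + pd j (P t) x = _ at h1
    linarith
  have hETeq : ∀ k, dt (Dd k) t = ET v e k := by
    intro k
    ext x
    have h1 := hN.director t ht x k
    simp only [ET, HT, Pi.sub_apply, Pi.add_apply, Finset.sum_apply, Pi.mul_apply]
    change dt (Dd k) t x + (∑ i, v i x * pd i (e k) x) =
      lap (e k) x + (∑ i, ∑ k' : Fin 3, (pd i (e k') x) ^ 2) * e k x at h1
    simp only [pow_two] at h1
    linarith
  have hp' : ∀ j, Sch (pd j (P t)) := by
    intro j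
    have h1 : pd j (P t) = lap (v j) - ∑ i, v i * pd i (v j) -
        ∑ i, pd i (∑ k, pd i (e k) * pd j (e k)) - dt (U j) t := by
      rw [hVTeq, VT]; ring
    rw [h1]
    exact (((st.hv j).lap.sub (Sch.sum fun i => (st.hv i).mul ((st.hv j).pd i))).sub
      (Sch.sum fun i => Sch.pd (Sch.sum fun k => (st.hd i k).mul (st.hd j k)) i)).sub
      (SF_slice (jU j).dt (sdU j) ht)
  have main := hst v e (P t) st hp hp'
  -- time derivatives
  have d1 : ∀ i j, HasDerivAt (fun s => I (pd i (lap (U j s)) * pd i (lap (U j s))))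
      (2 * I (pd i (lap (v j)) * pd i (lap (VT v e (P t) j)))) t := by
    intro i j
    have h1 := hasDeriv_sq (f := PD i (LAP (U j))) ((jU j).LAP.PD i)
      (SF_PD (jU j).LAP (SF_LAP (jU j) (sU j)) i) (by
        rw [dt_PD (jU j).LAP, dt_LAP (jU j)]
        exact SF_PD (jU j).dt.LAP (SF_LAP (jU j).dt (sdU j)) i) ht
    rw [dt_PD (jU j).LAP, dt_LAP (jU j)] at h1
    rw [← hVTeq]
    exact h1
  have d2 : ∀ k, HasDerivAt (fun s => I (lap (lap (Dd k s)) * lap (lap (Dd k s))))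
      (2 * I (lap (lap (e k)) * lap (lap (ET v e k)))) t := by
    intro k
    have h1 := hasDeriv_sq (f := LAP (LAP (Dd k))) (jD k).LAP.LAP
      (by
        rw [LL _ (jD k)]
        exact SF_sum (fun i => ((jD k).PD i).LAP.PD i) fun i =>
          SF_PD ((jD k).PD i).LAP (SF_LAP ((jD k).PD i) (sD i k)) i) (by
        rw [dt_LAP (jD k).LAP, dt_LAP (jD k), LL _ (jD k).dt]
        refine SF_sum (fun i => ((jD k).dt.PD i).LAP.PD i) fun i =>
          SF_PD ((jD k).dt.PD i).LAP (SF_LAP ((jD k).dt.PD i) ?_) i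
        rw [← dt_PD (jD k)]
        exact sdD i k) ht
    rw [dt_LAP (jD k).LAP, dt_LAP (jD k)] at h1
    rw [← hETeq]
    exact h1
  -- norms
  have sqI : ∀ f : E3 → ℝ, (∫ x, (f x) ^ 2) = I (f * f) := by
    intro f
    unfold I
    refine integral_congr_ae (Filter.Eventually.of_forall fun x => ?_)
    simp only [Pi.mul_apply, pow_two]
  have g1 : ∀ s, gradLapL2u (u s) = NN (gr (la fun j => U j s)) := by
    intro s
    unfold gradLapL2u NN
    rw [Fintype.sum_prod_type]
    simp only [sqI]
    rfl
  have g2 : ∀ s, bilapL2 (d s) = NN (la (la fun j => Dd j s)) := by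
    intro s
    unfold bilapL2 NN
    simp only [sqI]
    rfl
  have g3 : bilapL2u (u t) = NN (la (la v)) := by
    unfold bilapL2u NN
    simp only [sqI]
    rfl
  have g4 : gradBilapL2 (d t) = NN (gr (la (la e))) := by
    unfold gradBilapL2 NN
    rw [Fintype.sum_prod_type]
    simp only [sqI]
    rfl
  have g5 : lapL2 (d t) = NN (la e) := by
    unfold lapL2 NN
    simp only [sqI]
    rfl
  have g6 : vortL2 (u t) = NN (gr v) := by
    unfold vortL2 NN
    simp only [sqI]
    rw [← curl_id st.hv st.div]
  have g7 : gradVortL2 (u t) = NN (la v) := by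
    unfold gradVortL2 NN
    simp only [sqI]
    rw [← grad_curl_id st.hv st.div]
  refine ⟨∑ j, ∑ i, 2 * I (pd i (lap (v j)) * pd i (lap (VT v e (P t) j))) +
    ∑ k, 2 * I (lap (lap (e k)) * lap (lap (ET v e k))), ?_, ?_⟩
  · have hs1 := HasDerivAt.fun_sum (u := Finset.univ) fun (j : Fin 3) _ =>
      HasDerivAt.fun_sum (u := Finset.univ) fun (i : Fin 3) _ => d1 i j
    have hs2 := HasDerivAt.fun_sum (u := Finset.univ) fun (k : Fin 3) _ => d2 k
    have hs := hs1.add hs2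
    refine hs.congr_of_eventuallyEq (Filter.Eventually.of_forall fun s => ?_)
    simp only [Pi.add_apply]
    rw [g1, g2, NN_sq, NN_sq, Fintype.sum_prod_type_right]
    rfl
  · rw [g3, g4, g5, g6, g7, g1]
    simp only [← Finset.mul_sum]
    exact main
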